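/- arXiv:1208.1032 — 4 statements merged into one kernel-verified Lean document; each statement's English description precedes it below -/
import Mathlib

section
/- Weighted Poincaré inequality with sharp constant N/2: Let N ≥ 1 and K(y) = exp(|y|²/4). Let f : ℝ^N → ℝ be locally integrable with a weak gradient g : ℝ^N → ℝ^N, and suppose ∫_{ℝ^N} K(y)|f(y)|² dy < ∞ and ∫_{ℝ^N} K(y)|g(y)|² dy < ∞. Then (N/2) ∫_{ℝ^N} K(y)|f(y)|² dy ≤ ∫_{ℝ^N} K(y)|g(y)|² dy. -/
open MeasureTheory

/-- `g` is a weak gradient of the locally integrable function `f` on `ℝ^N`. -/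
def HasWeakGradient {N : ℕ} (f : EuclideanSpace ℝ (Fin N) → ℝ)
    (g : EuclideanSpace ℝ (Fin N) → EuclideanSpace ℝ (Fin N)) : Prop :=
  MeasureTheory.LocallyIntegrable f volume ∧
  ∀ φ : EuclideanSpace ℝ (Fin N) → ℝ, ContDiff ℝ (⊤ : ℕ∞) φ → HasCompactSupport φ →
    ∀ i : Fin N,
      ∫ y, f y * fderiv ℝ φ y (EuclideanSpace.single i 1) = -∫ y, g y i * φ y

open scoped Convolution Topology
open Filter

lemma weight_fderiv {N : ℕ} (i : Fin N) (x : EuclideanSpace ℝ (Fin N)) :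
    fderiv ℝ (fun y : EuclideanSpace ℝ (Fin N) => Real.exp (‖y‖ ^ 2 / 4) * y i) x
      (EuclideanSpace.single i 1) = Real.exp (‖x‖ ^ 2 / 4) * (1 + (x i) ^ 2 / 2) := by
  have h1 : HasFDerivAt (fun y : EuclideanSpace ℝ (Fin N) => ‖y‖ ^ 2) (2 • innerSL ℝ x) x :=
    (hasStrictFDerivAt_norm_sq x).hasFDerivAt
  have h2 := (h1.mul_const (1/4 : ℝ)).exp
  have h3 : HasFDerivAt (fun y : EuclideanSpace ℝ (Fin N) => y i)
      (EuclideanSpace.proj (𝕜 := ℝ) i : EuclideanSpace ℝ (Fin N) →L[ℝ] ℝ) x :=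
    (EuclideanSpace.proj (𝕜 := ℝ) i : EuclideanSpace ℝ (Fin N) →L[ℝ] ℝ).hasFDerivAt
  have h4 := h2.mul h3
  have h5 : (fun y : EuclideanSpace ℝ (Fin N) => Real.exp (‖y‖ ^ 2 / 4) * y i) =
    (fun y : EuclideanSpace ℝ (Fin N) => Real.exp (‖y‖ ^ 2 * (1/4)) * y i) := by
    funext y; congr 2; ring
  rw [h5]
  have h6 := h4.fderiv
  simp only [Pi.mul_def] at h6
  rw [h6]
  simp [EuclideanSpace.inner_single_right, div_eq_mul_inv]
  ring

lemma smooth_ineq {N : ℕ} (i : Fin N) (u : EuclideanSpace ℝ (Fin N) → ℝ)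
    (hu : ContDiff ℝ 1 u) (hc : HasCompactSupport u) :
    (1 / 2 : ℝ) * ∫ y, Real.exp (‖y‖ ^ 2 / 4) * (u y) ^ 2
      ≤ ∫ y, Real.exp (‖y‖ ^ 2 / 4) * (fderiv ℝ u y (EuclideanSpace.single i 1)) ^ 2 := by
  have huc := hu.continuous
  have hd : Continuous (fun y => fderiv ℝ u y (EuclideanSpace.single i 1)) :=
    (hu.continuous_fderiv one_ne_zero).clm_apply continuous_const
  have hK : Continuous (fun y : EuclideanSpace ℝ (Fin N) => Real.exp (‖y‖ ^ 2 / 4)) := by fun_prop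
  have hp : Continuous (fun y : EuclideanSpace ℝ (Fin N) => y i) := by fun_prop
  have hdc : HasCompactSupport (fun y => fderiv ℝ u y (EuclideanSpace.single i 1)) :=
    hc.fderiv_apply ℝ _
  have hu0 : ∀ x, x ∉ tsupport u → u x = 0 := fun x hx => image_eq_zero_of_notMem_tsupport hx
  have hd0 : ∀ x, x ∉ tsupport u → fderiv ℝ u x (EuclideanSpace.single i 1) = 0 := fun x hx => by
    rw [fderiv_of_notMem_tsupport ℝ hx]; simp
  have key : ∀ F : EuclideanSpace ℝ (Fin N) → ℝ, Continuous F →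
      (∀ x, x ∉ tsupport u → F x = 0) → Integrable F := fun F hF h0 =>
    hF.integrable_of_hasCompactSupport (HasCompactSupport.intro hc h0)
  have hfd : ∀ x, fderiv ℝ (fun y => u y ^ 2) x (EuclideanSpace.single i 1) =
      2 * u x * fderiv ℝ u x (EuclideanSpace.single i 1) := by
    intro x
    have := ((hu.differentiable one_ne_zero x).hasFDerivAt.pow 2).fderiv
    change fderiv ℝ (fun y => u y ^ 2) x = _ at this
    rw [this]; simp
  have ibp := integral_mul_fderiv_eq_neg_fderiv_mul_of_integrable (𝕜 := ℝ) (μ := volume)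
    (f := fun y : EuclideanSpace ℝ (Fin N) => Real.exp (‖y‖ ^ 2 / 4) * y i)
    (g := fun y => u y ^ 2) (v := EuclideanSpace.single i 1)
    (by
      simp only [weight_fderiv]
      refine key _ (by fun_prop) (fun x hx => by simp [hu0 x hx]))
    (by
      simp only [hfd]
      refine key _ (by fun_prop) (fun x hx => by simp [hu0 x hx]))
    (key _ (by fun_prop) (fun x hx => by simp [hu0 x hx]))
    (fun x _ => by
      have h1 : DifferentiableAt ℝ (fun y : EuclideanSpace ℝ (Fin N) => ‖y‖ ^ 2) x :=
        (hasStrictFDerivAt_norm_sq x).hasFDerivAt.differentiableAt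
      fun_prop)
    (fun x _ => (hu.differentiable one_ne_zero x).pow 2)
  simp only [weight_fderiv, hfd] at ibp
  have i1 : Integrable (fun y => Real.exp (‖y‖ ^ 2 / 4) * (u y) ^ 2) :=
    key _ (by fun_prop) (fun x hx => by simp [hu0 x hx])
  have i2 : Integrable (fun y => Real.exp (‖y‖ ^ 2 / 4) *
      (fderiv ℝ u y (EuclideanSpace.single i 1)) ^ 2) :=
    key _ (by fun_prop) (fun x hx => by simp [hd0 x hx])
  have i3 : Integrable (fun y : EuclideanSpace ℝ (Fin N) => Real.exp (‖y‖ ^ 2 / 4) * y i *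
      (2 * u y * fderiv ℝ u y (EuclideanSpace.single i 1))) :=
    key _ (by fun_prop) (fun x hx => by simp [hd0 x hx])
  have i4 : Integrable (fun y : EuclideanSpace ℝ (Fin N) => Real.exp (‖y‖ ^ 2 / 4) *
      (1 + y i ^ 2 / 2) * u y ^ 2) :=
    key _ (by fun_prop) (fun x hx => by simp [hu0 x hx])
  have hnn : 0 ≤ ∫ y : EuclideanSpace ℝ (Fin N), Real.exp (‖y‖ ^ 2 / 4) *
      (fderiv ℝ u y (EuclideanSpace.single i 1) + y i / 2 * u y) ^ 2 :=
    integral_nonneg fun y => by positivity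
  have heq : ∫ y : EuclideanSpace ℝ (Fin N), Real.exp (‖y‖ ^ 2 / 4) *
      (fderiv ℝ u y (EuclideanSpace.single i 1) + y i / 2 * u y) ^ 2 =
      ∫ y : EuclideanSpace ℝ (Fin N), ((Real.exp (‖y‖ ^ 2 / 4) *
      (fderiv ℝ u y (EuclideanSpace.single i 1)) ^ 2 - (1/2) * (Real.exp (‖y‖ ^ 2 / 4) * (u y) ^ 2))
      + ((1/2) * (Real.exp (‖y‖ ^ 2 / 4) * y i *
      (2 * u y * fderiv ℝ u y (EuclideanSpace.single i 1))) +
      (1/2) * (Real.exp (‖y‖ ^ 2 / 4) * (1 + y i ^ 2 / 2) * u y ^ 2))) := by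
    congr 1; funext y; ring
  rw [heq, integral_add (i2.sub' (i1.const_mul _)) ((i3.const_mul _).fun_add (i4.const_mul _)),
    integral_sub i2 (i1.const_mul _), integral_add (i3.const_mul _) (i4.const_mul _),
    integral_const_mul, integral_const_mul, integral_const_mul, ibp] at hnn
  linarith

/-- Jensen for mollification. -/
lemma jensen_conv {N : ℕ} (ρ h : EuclideanSpace ℝ (Fin N) → ℝ) (hρ0 : ∀ x, 0 ≤ ρ x)
    (hρc : Continuous ρ) (hρs : HasCompactSupport ρ) (hρ1 : ∫ x, ρ x = 1)
    (hl : LocallyIntegrable h) (hh : Integrable (fun x => h x ^ 2))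
    (x : EuclideanSpace ℝ (Fin N)) :
    (∫ t, ρ t * h (x - t)) ^ 2 ≤ ∫ t, ρ t * h (x - t) ^ 2 := by
  have i0 : Integrable ρ := hρc.integrable_of_hasCompactSupport hρs
  have i1 : Integrable (fun t => ρ t * h (x - t)) :=
    hρs.convolutionExists_left (ContinuousLinearMap.lsmul ℝ ℝ) hρc hl x
  have i2 : Integrable (fun t => ρ t * h (x - t) ^ 2) :=
    hρs.convolutionExists_left (ContinuousLinearMap.lsmul ℝ ℝ) hρc hh.locallyIntegrable x
  set m := ∫ t, ρ t * h (x - t) with hm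
  have hnn : 0 ≤ ∫ t, ρ t * (h (x - t) - m) ^ 2 :=
    integral_nonneg fun t => mul_nonneg (hρ0 t) (sq_nonneg _)
  have heq : ∫ t, ρ t * (h (x - t) - m) ^ 2 =
      ∫ t, ((ρ t * h (x - t) ^ 2 - (2 * m) * (ρ t * h (x - t))) + m ^ 2 * ρ t) := by
    congr 1; funext t; ring
  rw [heq, integral_add (i2.sub' (i1.const_mul _)) (i0.const_mul _),
    integral_sub i2 (i1.const_mul _), integral_const_mul, integral_const_mul, hρ1, ← hm] at hnn
  nlinarith

/-- Weighted pointwise bound for mollification. -/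
lemma weighted_conv {N : ℕ} (ρ h : EuclideanSpace ℝ (Fin N) → ℝ) (hρ0 : ∀ x, 0 ≤ ρ x)
    (hρc : Continuous ρ) (hρs : HasCompactSupport ρ) (hρ1 : ∫ x, ρ x = 1)
    (ε S : ℝ) (hρε : ∀ x, ε < ‖x‖ → ρ x = 0) (hS : 0 ≤ S)
    (hl : LocallyIntegrable h)
    (hh : Integrable (fun x => Real.exp (‖x‖ ^ 2 / 4) * h x ^ 2))
    (hh1 : Integrable (fun x => h x ^ 2))
    (x : EuclideanSpace ℝ (Fin N)) (hx : ‖x‖ ≤ S) :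
    Real.exp (‖x‖ ^ 2 / 4) * (∫ t, ρ t * h (x - t)) ^ 2 ≤
      Real.exp (S * ε / 2) * ∫ t, ρ t * (Real.exp (‖x - t‖ ^ 2 / 4) * h (x - t) ^ 2) := by
  have i2 : Integrable (fun t => ρ t * h (x - t) ^ 2) :=
    hρs.convolutionExists_left (ContinuousLinearMap.lsmul ℝ ℝ) hρc hh1.locallyIntegrable x
  have i3 : Integrable (fun t => ρ t * (Real.exp (‖x - t‖ ^ 2 / 4) * h (x - t) ^ 2)) :=
    hρs.convolutionExists_left (ContinuousLinearMap.lsmul ℝ ℝ) hρc hh.locallyIntegrable x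
  refine (mul_le_mul_of_nonneg_left (jensen_conv ρ h hρ0 hρc hρs hρ1 hl hh1 x)
    (Real.exp_pos _).le).trans ?_
  rw [← integral_const_mul, ← integral_const_mul]
  refine integral_mono (i2.const_mul _) (i3.const_mul _) fun t => ?_
  dsimp only
  by_cases ht : ε < ‖t‖
  · simp [hρε t ht]
  push Not at ht
  have h1 : ‖x‖ ≤ ‖x - t‖ + ‖t‖ := by simpa using norm_add_le (x - t) t
  have h2 : ‖x‖ ^ 2 / 4 ≤ S * ε / 2 + ‖x - t‖ ^ 2 / 4 := by
    have e : ‖x - t‖ ^ 2 = ‖x‖ ^ 2 - 2 * inner ℝ x t + ‖t‖ ^ 2 := norm_sub_sq_real x t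
    have c := real_inner_le_norm x t
    have : ‖x‖ * ‖t‖ ≤ S * ε := mul_le_mul hx ht (norm_nonneg _) hS
    nlinarith [sq_nonneg ‖t‖]
  have h3 := Real.exp_le_exp.2 h2
  rw [Real.exp_add] at h3
  have := mul_le_mul_of_nonneg_right h3 (mul_nonneg (hρ0 t) (sq_nonneg (h (x - t))))
  linarith

/-- Derivative of mollification. -/
lemma conv_fderiv {N : ℕ} (i : Fin N) (ρ f G : EuclideanSpace ℝ (Fin N) → ℝ)
    (hρc : ContDiff ℝ (⊤ : ℕ∞) ρ) (hρs : HasCompactSupport ρ)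
    (hl : LocallyIntegrable f)
    (hw : ∀ φ : EuclideanSpace ℝ (Fin N) → ℝ, ContDiff ℝ (⊤ : ℕ∞) φ → HasCompactSupport φ →
      ∫ y, f y * fderiv ℝ φ y (EuclideanSpace.single i 1) = -∫ y, G y * φ y)
    (x : EuclideanSpace ℝ (Fin N)) :
    fderiv ℝ (fun x => ∫ t, ρ t * f (x - t)) x (EuclideanSpace.single i 1) =
      ∫ t, ρ t * G (x - t) := by
  have hρ1 : ContDiff ℝ 1 ρ := hρc.of_le (by exact_mod_cast le_top)
  have h := hρs.hasFDerivAt_convolution_left (ContinuousLinearMap.lsmul ℝ ℝ) hρ1 hl x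
  have h' : fderiv ℝ (fun x => ∫ t, ρ t * f (x - t)) x = _ := h.fderiv
  rw [h', convolution_eq_swap]
  have hint : Integrable (fun t => ((ContinuousLinearMap.precompL (EuclideanSpace ℝ (Fin N))
      (ContinuousLinearMap.lsmul ℝ ℝ : ℝ →L[ℝ] ℝ →L[ℝ] ℝ)) (fderiv ℝ ρ (x - t))) (f t)) := by
    have := (hρs.fderiv ℝ).convolutionExists_left
      ((ContinuousLinearMap.lsmul ℝ ℝ : ℝ →L[ℝ] ℝ →L[ℝ] ℝ).precompL (EuclideanSpace ℝ (Fin N)))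
      (hρ1.continuous_fderiv one_ne_zero) hl x
    exact this.integrable_swap
  rw [ContinuousLinearMap.integral_apply hint]
  simp only [ContinuousLinearMap.precompL_apply, ContinuousLinearMap.lsmul_apply, smul_eq_mul]
  have hφ := hw (fun t => ρ (x - t)) (hρc.comp (contDiff_const.sub contDiff_id))
    (hρs.comp_homeomorph (Homeomorph.subLeft x))
  have hfd : ∀ t, fderiv ℝ (fun t => ρ (x - t)) t (EuclideanSpace.single i 1) =
      - fderiv ℝ ρ (x - t) (EuclideanSpace.single i 1) := by
    intro t
    have h1 : HasFDerivAt (fun t => x - t) (-(ContinuousLinearMap.id ℝ _)) t :=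
      (hasFDerivAt_id t).const_sub x
    have h2 := ((hρ1.differentiable one_ne_zero (x - t)).hasFDerivAt.comp t h1).fderiv
    change fderiv ℝ (fun t => ρ (x - t)) t = _ at h2
    rw [h2]; simp
  simp only [hfd, mul_neg, integral_neg, neg_inj] at hφ
  simp only [mul_comm _ (f _), hφ]
  rw [← integral_sub_left_eq_self _ volume x]
  congr 1; funext t; simp [mul_comm]

lemma sq_integrable {N : ℕ} (f : EuclideanSpace ℝ (Fin N) → ℝ)
    (hm : AEStronglyMeasurable f)
    (hf : Integrable (fun x => Real.exp (‖x‖ ^ 2 / 4) * f x ^ 2)) :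
    Integrable (fun x => f x ^ 2) := by
  refine hf.mono' (hm.pow 2) (Eventually.of_forall fun x => ?_)
  rw [Real.norm_of_nonneg (sq_nonneg _)]
  exact le_mul_of_one_le_left (sq_nonneg _) (Real.one_le_exp (by positivity))

lemma conv_integral {N : ℕ} (ρ h : EuclideanSpace ℝ (Fin N) → ℝ)
    (i0 : Integrable ρ) (hρ1 : ∫ x, ρ x = 1) (hh : Integrable h) :
    Integrable (fun x => ∫ t, ρ t * h (x - t)) ∧ ∫ x, ∫ t, ρ t * h (x - t) = ∫ x, h x := by
  refine ⟨i0.integrable_convolution (ContinuousLinearMap.lsmul ℝ ℝ) hh, ?_⟩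
  have := integral_convolution (ContinuousLinearMap.lsmul ℝ ℝ) i0 hh
  rw [hρ1] at this
  simpa [convolution_def] using this

lemma step_ineq {N : ℕ} (i : Fin N) (f G : EuclideanSpace ℝ (Fin N) → ℝ)
    (hl : LocallyIntegrable f) (hGl : LocallyIntegrable G)
    (hw : ∀ φ : EuclideanSpace ℝ (Fin N) → ℝ, ContDiff ℝ (⊤ : ℕ∞) φ → HasCompactSupport φ →
      ∫ y, f y * fderiv ℝ φ y (EuclideanSpace.single i 1) = -∫ y, G y * φ y)
    (hf : Integrable (fun x => Real.exp (‖x‖ ^ 2 / 4) * f x ^ 2))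
    (hG : Integrable (fun x => Real.exp (‖x‖ ^ 2 / 4) * G x ^ 2))
    (ρ χ : EuclideanSpace ℝ (Fin N) → ℝ) (hρ0 : ∀ x, 0 ≤ ρ x)
    (hρc : ContDiff ℝ (⊤ : ℕ∞) ρ) (hρs : HasCompactSupport ρ) (hρ1 : ∫ x, ρ x = 1)
    (ε S M δ : ℝ) (hρε : ∀ x, ε < ‖x‖ → ρ x = 0) (hS : 0 ≤ S) (hδ : 0 < δ)
    (hχc : ContDiff ℝ 1 χ) (hχs : tsupport χ ⊆ Metric.closedBall 0 S)
    (hχ0 : ∀ x, 0 ≤ χ x) (hχ1 : ∀ x, χ x ≤ 1)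
    (hχM : ∀ x, |fderiv ℝ χ x (EuclideanSpace.single i 1)| ≤ M) :
    Integrable (fun x => Real.exp (‖x‖ ^ 2 / 4) * (χ x * ∫ t, ρ t * f (x - t)) ^ 2) ∧
    (1 / 2 : ℝ) * ∫ x, Real.exp (‖x‖ ^ 2 / 4) * (χ x * ∫ t, ρ t * f (x - t)) ^ 2 ≤
      Real.exp (S * ε / 2) * ((1 + δ) * (∫ x, Real.exp (‖x‖ ^ 2 / 4) * G x ^ 2) +
        (1 + 1 / δ) * M ^ 2 * (∫ x, Real.exp (‖x‖ ^ 2 / 4) * f x ^ 2)) := by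
  have i0 : Integrable ρ := hρc.continuous.integrable_of_hasCompactSupport hρs
  have hρ1' : ContDiff ℝ 1 ρ := hρc.of_le (by exact_mod_cast le_top)
  have hFc : ContDiff ℝ 1 (fun x => ∫ t, ρ t * f (x - t)) :=
    hρs.contDiff_convolution_left (n := 1) (ContinuousLinearMap.lsmul ℝ ℝ) hρ1' hl
  have hF' := conv_fderiv i ρ f G hρc hρs hl hw
  have hχcs : HasCompactSupport χ :=
    (isCompact_closedBall (0 : EuclideanSpace ℝ (Fin N)) S).of_isClosed_subset
      (isClosed_tsupport _) hχs
  obtain ⟨iA, eA⟩ := conv_integral ρ _ i0 hρ1 hG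
  obtain ⟨iB, eB⟩ := conv_integral ρ _ i0 hρ1 hf
  have hf1 := sq_integrable f hl.aestronglyMeasurable hf
  have hG1 := sq_integrable G hGl.aestronglyMeasurable hG
  have wF := weighted_conv ρ f hρ0 hρc.continuous hρs hρ1 ε S hρε hS hl hf hf1
  have wG := weighted_conv ρ G hρ0 hρc.continuous hρs hρ1 ε S hρε hS hGl hG hG1
  set F : EuclideanSpace ℝ (Fin N) → ℝ := fun x => ∫ t, ρ t * f (x - t) with hF
  have hFx : ∀ x, ∫ t, ρ t * f (x - t) = F x := fun x => rfl
  simp only [hFx] at wF ⊢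
  have huc : ContDiff ℝ 1 (fun x => χ x * F x) := hχc.mul hFc
  have hus : HasCompactSupport (fun x => χ x * F x) := hχcs.mul_right
  have hK : Continuous (fun y : EuclideanSpace ℝ (Fin N) => Real.exp (‖y‖ ^ 2 / 4)) := by fun_prop
  refine ⟨(hK.mul (huc.continuous.pow 2)).integrable_of_hasCompactSupport
    (HasCompactSupport.intro hχcs fun x hx => by
      simp [image_eq_zero_of_notMem_tsupport hx]), ?_⟩
  refine (smooth_ineq i _ huc hus).trans ?_
  rw [← eA, ← eB, ← integral_const_mul, ← integral_const_mul,
    ← integral_add (iA.const_mul _) (iB.const_mul _), ← integral_const_mul]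
  refine integral_mono_of_nonneg (Eventually.of_forall fun x => by positivity)
    (((iA.const_mul _).fun_add (iB.const_mul _)).const_mul _) (Eventually.of_forall fun x => ?_)
  dsimp only
  have nA : 0 ≤ ∫ t, ρ t * (Real.exp (‖x - t‖ ^ 2 / 4) * G (x - t) ^ 2) :=
    integral_nonneg fun t => mul_nonneg (hρ0 t) (by positivity)
  have nB : 0 ≤ ∫ t, ρ t * (Real.exp (‖x - t‖ ^ 2 / 4) * f (x - t) ^ 2) :=
    integral_nonneg fun t => mul_nonneg (hρ0 t) (by positivity)
  have hprod : fderiv ℝ (fun x => χ x * F x) x (EuclideanSpace.single i 1) =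
      χ x * (∫ t, ρ t * G (x - t)) + F x * fderiv ℝ χ x (EuclideanSpace.single i 1) := by
    rw [fderiv_fun_mul (hχc.differentiable one_ne_zero x) (hFc.differentiable one_ne_zero x)]
    simp [hF' x]
  rw [hprod]
  by_cases hx : ‖x‖ ≤ S
  · have a1 := wF x hx
    have a2 := wG x hx
    set D := ∫ t, ρ t * G (x - t)
    set c := fderiv ℝ χ x (EuclideanSpace.single i 1) with hc
    have hcM : c ^ 2 ≤ M ^ 2 := by
      rw [← sq_abs c]; exact pow_le_pow_left₀ (abs_nonneg _) (hχM x) 2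
    have hχ2 : χ x ^ 2 ≤ 1 := pow_le_one₀ (hχ0 x) (hχ1 x)
    have y1 : (χ x * D + F x * c) ^ 2 ≤ (1 + δ) * (χ x * D) ^ 2 + (1 + 1 / δ) * (F x * c) ^ 2 := by
      have : (1 + δ) * (χ x * D) ^ 2 + (1 + 1 / δ) * (F x * c) ^ 2 - (χ x * D + F x * c) ^ 2
          = (δ * (χ x * D) - F x * c) ^ 2 / δ := by field_simp; ring
      have : 0 ≤ (δ * (χ x * D) - F x * c) ^ 2 / δ := by positivity
      linarith
    have y2 : (χ x * D) ^ 2 ≤ D ^ 2 := by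
      rw [mul_pow]; exact mul_le_of_le_one_left (sq_nonneg _) hχ2
    have y3 : (F x * c) ^ 2 ≤ M ^ 2 * F x ^ 2 := by
      rw [mul_pow, mul_comm]; exact mul_le_mul_of_nonneg_right hcM (sq_nonneg _)
    calc Real.exp (‖x‖ ^ 2 / 4) * (χ x * D + F x * c) ^ 2
        ≤ Real.exp (‖x‖ ^ 2 / 4) * ((1 + δ) * D ^ 2 + (1 + 1 / δ) * (M ^ 2 * F x ^ 2)) := by
          refine mul_le_mul_of_nonneg_left (y1.trans ?_) (Real.exp_pos _).le
          gcongr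
      _ = (1 + δ) * (Real.exp (‖x‖ ^ 2 / 4) * D ^ 2) +
          (1 + 1 / δ) * M ^ 2 * (Real.exp (‖x‖ ^ 2 / 4) * F x ^ 2) := by ring
      _ ≤ _ := by
          have z1 := mul_le_mul_of_nonneg_left a2 (show 0 ≤ 1 + δ by positivity)
          have z2 := mul_le_mul_of_nonneg_left a1 (show 0 ≤ (1 + 1 / δ) * M ^ 2 by positivity)
          refine (add_le_add z1 z2).trans (le_of_eq ?_)
          ring
  · have hx' : x ∉ tsupport χ := fun h => hx (by simpa using hχs h)
    rw [image_eq_zero_of_notMem_tsupport hx', fderiv_of_notMem_tsupport ℝ hx']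
    simp only [zero_mul, zero_apply, mul_zero, add_zero, ne_eq,
      OfNat.ofNat_ne_zero, not_false_eq_true, zero_pow]
    positivity

/-- Cutoffs. -/
lemma exists_cutoff (N : ℕ) : ∃ (C : ℝ) (χ : ℕ → EuclideanSpace ℝ (Fin N) → ℝ),
    ∀ n : ℕ, ContDiff ℝ (⊤ : ℕ∞) (χ n) ∧
      tsupport (χ n) ⊆ Metric.closedBall 0 (2 * ((n : ℝ) + 1)) ∧
      (∀ x, 0 ≤ χ n x) ∧ (∀ x, χ n x ≤ 1) ∧
      (∀ x, ‖fderiv ℝ (χ n) x‖ ≤ C / ((n : ℝ) + 1)) ∧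
      (∀ x, ‖x‖ ≤ (n : ℝ) + 1 → χ n x = 1) := by
  let b : ContDiffBump (0 : EuclideanSpace ℝ (Fin N)) := ⟨1, 2, one_pos, one_lt_two⟩
  have hb : ContDiff ℝ (⊤ : ℕ∞) b := b.contDiff
  have hb1 : ContDiff ℝ 1 b := b.contDiff
  obtain ⟨C, hC⟩ := (b.hasCompactSupport.fderiv ℝ).exists_bound_of_continuous
    (hb1.continuous_fderiv one_ne_zero)
  refine ⟨C, fun n x => b (((n : ℝ) + 1)⁻¹ • x), fun n => ?_⟩
  have hn : (0 : ℝ) < (n : ℝ) + 1 := by positivity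
  refine ⟨hb.comp (contDiff_const_smul _), ?_, fun x => b.nonneg, fun x => b.le_one, fun x => ?_,
    fun x hx => ?_⟩
  · refine closure_minimal (fun x hx => ?_) Metric.isClosed_closedBall
    rw [mem_closedBall_zero_iff]
    by_contra h
    push Not at h
    refine hx (b.zero_of_le_dist ?_)
    rw [dist_zero_right, norm_smul, norm_inv, Real.norm_of_nonneg hn.le, inv_mul_eq_div,
      le_div_iff₀ hn]
    exact h.le
  · have h2 := fderiv_comp_smul (𝕜 := ℝ) (f := b) (((n : ℝ) + 1)⁻¹) (x := x)
    rw [h2, norm_smul, norm_inv, Real.norm_of_nonneg hn.le, inv_mul_eq_div]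
    gcongr
    exact hC _
  · refine b.one_of_mem_closedBall ?_
    rw [mem_closedBall_zero_iff, norm_smul, norm_inv, Real.norm_of_nonneg hn.le, inv_mul_eq_div,
      div_le_iff₀ hn]
    simpa [b] using hx

lemma coord_ineq {N : ℕ} (i : Fin N) (f G : EuclideanSpace ℝ (Fin N) → ℝ)
    (hl : LocallyIntegrable f) (hGl : LocallyIntegrable G)
    (hw : ∀ φ : EuclideanSpace ℝ (Fin N) → ℝ, ContDiff ℝ (⊤ : ℕ∞) φ → HasCompactSupport φ →
      ∫ y, f y * fderiv ℝ φ y (EuclideanSpace.single i 1) = -∫ y, G y * φ y)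
    (hf : Integrable (fun x => Real.exp (‖x‖ ^ 2 / 4) * f x ^ 2))
    (hG : Integrable (fun x => Real.exp (‖x‖ ^ 2 / 4) * G x ^ 2)) :
    (1 / 2 : ℝ) * ∫ x, Real.exp (‖x‖ ^ 2 / 4) * f x ^ 2 ≤
      ∫ x, Real.exp (‖x‖ ^ 2 / 4) * G x ^ 2 := by
  obtain ⟨C, χ, hχ⟩ := exists_cutoff N
  let b : ℕ → ContDiffBump (0 : EuclideanSpace ℝ (Fin N)) := fun n =>
    ⟨(1 / ((n : ℝ) + 1) ^ 2) / 2, 1 / ((n : ℝ) + 1) ^ 2, by positivity,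
      half_lt_self (by positivity)⟩
  have hbo : ∀ n, (b n).rOut = 1 / ((n : ℝ) + 1) ^ 2 := fun n => rfl
  have hbi : ∀ n, (b n).rIn = (1 / ((n : ℝ) + 1) ^ 2) / 2 := fun n => rfl
  let ρ : ℕ → EuclideanSpace ℝ (Fin N) → ℝ := fun n => (b n).normed volume
  set A := ∫ x, Real.exp (‖x‖ ^ 2 / 4) * G x ^ 2 with hA
  set B := ∫ x, Real.exp (‖x‖ ^ 2 / 4) * f x ^ 2 with hB
  let u : ℕ → EuclideanSpace ℝ (Fin N) → ℝ := fun n x => χ n x * ∫ t, ρ n t * f (x - t)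
  let r : ℕ → ℝ := fun n => 1 / ((n : ℝ) + 1)
  have hr : Tendsto r atTop (𝓝 0) := tendsto_one_div_add_atTop_nhds_zero_nat
  let rhs : ℕ → ℝ := fun n => Real.exp (r n) * ((1 + r n) * A + (r n + 1) * r n * C ^ 2 * B)
  have hrhs : Tendsto rhs atTop (𝓝 A) := by
    have : Tendsto (fun s : ℝ => Real.exp s * ((1 + s) * A + (s + 1) * s * C ^ 2 * B)) (𝓝 0)
        (𝓝 A) := by
      have hcont : Continuous (fun s : ℝ =>
        Real.exp s * ((1 + s) * A + (s + 1) * s * C ^ 2 * B)) := by fun_prop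
      simpa using hcont.tendsto 0
    exact this.comp hr
  have hstep : ∀ n, Integrable (fun x => Real.exp (‖x‖ ^ 2 / 4) * (u n x) ^ 2) ∧
      ∫ x, Real.exp (‖x‖ ^ 2 / 4) * (u n x) ^ 2 ≤ 2 * rhs n := by
    intro n
    have hn : (0 : ℝ) < (n : ℝ) + 1 := by positivity
    obtain ⟨c1, c2, c3, c4, c5, c6⟩ := hχ n
    obtain ⟨s1, s2⟩ := step_ineq i f G hl hGl hw hf hG (ρ n) (χ n) (b n).nonneg_normed
      (b n).contDiff_normed (b n).hasCompactSupport_normed (b n).integral_normed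
      (1 / ((n : ℝ) + 1) ^ 2) (2 * ((n : ℝ) + 1)) (C / ((n : ℝ) + 1)) (r n)
      (fun x hx => by
        have : x ∉ Function.support ((b n).normed volume) := by
          rw [(b n).support_normed_eq, mem_ball_zero_iff, hbo]
          exact not_lt.2 hx.le
        simpa using this)
      (by positivity) (by positivity) (c1.of_le (by exact_mod_cast le_top)) c2 c3 c4
      (fun x => by
        have := (fderiv ℝ (χ n) x).le_opNorm (EuclideanSpace.single i 1)
        simp only [Real.norm_eq_abs, EuclideanSpace.norm_single, abs_one, mul_one] at this
        exact this.trans (c5 x))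
    refine ⟨s1, ?_⟩
    have e1 : 2 * ((n : ℝ) + 1) * (1 / ((n : ℝ) + 1) ^ 2) / 2 = r n := by
      simp only [r]; field_simp
    have e2 : (1 + 1 / r n) * (C / ((n : ℝ) + 1)) ^ 2 = (r n + 1) * r n * C ^ 2 := by
      simp only [r]; field_simp
    rw [e1, e2] at s2
    have : ∫ x, Real.exp (‖x‖ ^ 2 / 4) * (u n x) ^ 2 = ∫ x, Real.exp (‖x‖ ^ 2 / 4) *
      (χ n x * ∫ t, ρ n t * f (x - t)) ^ 2 := rfl
    rw [this]
    change _ ≤ rhs n at s2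
    linarith
  have hconv : ∀ᵐ x : EuclideanSpace ℝ (Fin N),
      Tendsto (fun n => Real.exp (‖x‖ ^ 2 / 4) * (u n x) ^ 2) atTop
        (𝓝 (Real.exp (‖x‖ ^ 2 / 4) * f x ^ 2)) := by
    have h1 : Tendsto (fun n => (b n).rOut) atTop (𝓝 0) := by
      simp only [hbo]
      have := hr.pow 2
      simpa [r] using this
    have h2 := ContDiffBump.ae_convolution_tendsto_right_of_locallyIntegrable (μ := volume)
      (φ := b) (K := 2) h1 (Eventually.of_forall fun n => by rw [hbo, hbi]; linarith) hl
    filter_upwards [h2] with x hx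
    have hx' : Tendsto (fun n => ∫ t, ρ n t * f (x - t)) atTop (𝓝 (f x)) := hx
    have h3 : Tendsto (fun n => χ n x) atTop (𝓝 1) := by
      refine tendsto_const_nhds.congr' ?_
      obtain ⟨m, hm⟩ := exists_nat_ge ‖x‖
      filter_upwards [eventually_ge_atTop m] with n hn
      refine ((hχ n).2.2.2.2.2 x ?_).symm
      have : (m : ℝ) ≤ n := by exact_mod_cast hn
      linarith
    have h4 := h3.mul hx'
    rw [one_mul] at h4
    exact (h4.pow 2).const_mul _
  have hfat : ENNReal.ofReal B ≤ ENNReal.ofReal (2 * A) := by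
    have l1 : ENNReal.ofReal B = ∫⁻ x, ENNReal.ofReal (Real.exp (‖x‖ ^ 2 / 4) * f x ^ 2) :=
      ofReal_integral_eq_lintegral_ofReal hf (Eventually.of_forall fun x => by positivity)
    have l2 : ∫⁻ x, ENNReal.ofReal (Real.exp (‖x‖ ^ 2 / 4) * f x ^ 2) =
        ∫⁻ x, liminf (fun n => ENNReal.ofReal (Real.exp (‖x‖ ^ 2 / 4) * (u n x) ^ 2)) atTop := by
      refine lintegral_congr_ae ?_
      filter_upwards [hconv] with x hx
      exact (ENNReal.tendsto_ofReal hx).liminf_eq.symm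
    rw [l1, l2]
    refine (lintegral_liminf_le' fun n =>
      (hstep n).1.aestronglyMeasurable.aemeasurable.ennreal_ofReal).trans ?_
    have l3 : Tendsto (fun n => ENNReal.ofReal (2 * rhs n)) atTop
        (𝓝 (ENNReal.ofReal (2 * A))) := ENNReal.tendsto_ofReal (hrhs.const_mul 2)
    rw [← l3.liminf_eq]
    refine liminf_le_liminf (Eventually.of_forall fun n => ?_)
    rw [← ofReal_integral_eq_lintegral_ofReal (hstep n).1
      (Eventually.of_forall fun x => by positivity)]
    exact ENNReal.ofReal_le_ofReal (hstep n).2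
  have hA0 : 0 ≤ A := integral_nonneg fun x => by positivity
  have := (ENNReal.ofReal_le_ofReal_iff (by positivity)).1 hfat
  linarith

lemma locInt_of_sq {N : ℕ} (h : EuclideanSpace ℝ (Fin N) → ℝ) (hm : AEStronglyMeasurable h)
    (hh : Integrable (fun x => h x ^ 2)) : LocallyIntegrable h :=
  ((memLp_two_iff_integrable_sq hm).2 hh).locallyIntegrable (by norm_num)

/-- Weighted Poincaré inequality with sharp constant `N/2`. -/
theorem stmt_6 (N : ℕ) (hN : 1 ≤ N)
    (f : EuclideanSpace ℝ (Fin N) → ℝ)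
    (g : EuclideanSpace ℝ (Fin N) → EuclideanSpace ℝ (Fin N))
    (hfg : HasWeakGradient f g)
    (hf2 : Integrable (fun y : EuclideanSpace ℝ (Fin N) =>
      Real.exp (‖y‖ ^ 2 / 4) * (f y) ^ 2))
    (hg2 : Integrable (fun y : EuclideanSpace ℝ (Fin N) =>
      Real.exp (‖y‖ ^ 2 / 4) * ‖g y‖ ^ 2)) :
    (N / 2 : ℝ) * ∫ y : EuclideanSpace ℝ (Fin N), Real.exp (‖y‖ ^ 2 / 4) * (f y) ^ 2
      ≤ ∫ y : EuclideanSpace ℝ (Fin N), Real.exp (‖y‖ ^ 2 / 4) * ‖g y‖ ^ 2 := by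
  obtain ⟨hl, hw⟩ := hfg
  have hfi : ∀ φ : EuclideanSpace ℝ (Fin N) → ℝ, ContDiff ℝ (⊤ : ℕ∞) φ → HasCompactSupport φ →
      ∀ i : Fin N, Integrable (fun y => f y * fderiv ℝ φ y (EuclideanSpace.single i 1)) := by
    intro φ h1 h2 i
    have h3 : ContDiff ℝ 1 φ := h1.of_le (by exact_mod_cast le_top)
    exact hl.integrable_smul_right_of_hasCompactSupport
      ((h3.continuous_fderiv one_ne_zero).clm_apply continuous_const) (h2.fderiv_apply ℝ _)
  by_cases hall : ∀ i : Fin N, ∀ φ : EuclideanSpace ℝ (Fin N) → ℝ, ContDiff ℝ (⊤ : ℕ∞) φ →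
      HasCompactSupport φ → AEStronglyMeasurable (fun y => g y i * φ y)
  · -- all components are measurable
    obtain ⟨C, χ, hχ⟩ := exists_cutoff N
    have hK : Continuous (fun y : EuclideanSpace ℝ (Fin N) => Real.exp (‖y‖ ^ 2 / 4)) := by
      fun_prop
    have hgm : ∀ i, AEStronglyMeasurable (fun y => g y i) := by
      intro i
      refine aestronglyMeasurable_of_tendsto_ae atTop (f := fun n y => g y i * χ n y)
        (fun n => hall i _ (hχ n).1 ?_) (Eventually.of_forall fun x => ?_)
      · exact (isCompact_closedBall (0 : EuclideanSpace ℝ (Fin N)) _).of_isClosed_subset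
          (isClosed_tsupport _) (hχ n).2.1
      · refine tendsto_const_nhds.congr' ?_
        obtain ⟨m, hm⟩ := exists_nat_ge ‖x‖
        filter_upwards [eventually_ge_atTop m] with n hn
        have : (m : ℝ) ≤ n := by exact_mod_cast hn
        rw [(hχ n).2.2.2.2.2 x (by linarith), mul_one]
    have hgi : ∀ i, Integrable (fun y => Real.exp (‖y‖ ^ 2 / 4) * (g y i) ^ 2) := by
      intro i
      refine hg2.mono' (hK.aestronglyMeasurable.mul ((hgm i).pow 2))
        (Eventually.of_forall fun y => ?_)
      rw [Real.norm_of_nonneg (by positivity)]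
      refine mul_le_mul_of_nonneg_left ?_ (Real.exp_pos _).le
      rw [← sq_abs]
      exact pow_le_pow_left₀ (abs_nonneg _) (PiLp.norm_apply_le (g y) i) 2
    have hcoord : ∀ i : Fin N, (1 / 2 : ℝ) * ∫ y, Real.exp (‖y‖ ^ 2 / 4) * (f y) ^ 2 ≤
        ∫ y, Real.exp (‖y‖ ^ 2 / 4) * (g y i) ^ 2 := fun i =>
      coord_ineq i f (fun y => g y i) hl
        (locInt_of_sq _ (hgm i) (sq_integrable _ (hgm i) (hgi i)))
        (fun φ h1 h2 => hw φ h1 h2 i) hf2 (hgi i)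
    have hsum := Finset.sum_le_sum fun i (_ : i ∈ Finset.univ) => hcoord i
    rw [← integral_finsetSum _ fun i _ => hgi i] at hsum
    simp only [Finset.sum_const, Finset.card_univ, Fintype.card_fin, nsmul_eq_mul,
      ← Finset.mul_sum] at hsum
    simp only [EuclideanSpace.norm_sq_eq (g _), Real.norm_eq_abs, sq_abs]
    linarith
  · push Not at hall
    obtain ⟨i, ψ, hψ1, hψ2, hψ3⟩ := hall
    have hbad : ∀ φ : EuclideanSpace ℝ (Fin N) → ℝ, ContDiff ℝ (⊤ : ℕ∞) φ → HasCompactSupport φ →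
        ¬ AEStronglyMeasurable (fun y => g y i * φ y) →
        ∫ y, f y * fderiv ℝ φ y (EuclideanSpace.single i 1) = 0 := by
      intro φ h1 h2 h3
      rw [hw φ h1 h2 i, integral_non_aestronglyMeasurable h3, neg_zero]
    have hz : ∀ φ : EuclideanSpace ℝ (Fin N) → ℝ, ContDiff ℝ (⊤ : ℕ∞) φ → HasCompactSupport φ →
        ∫ y, f y * fderiv ℝ φ y (EuclideanSpace.single i 1) = 0 := by
      intro φ h1 h2
      by_cases h3 : AEStronglyMeasurable (fun y => g y i * φ y)
      · have h4 := hbad (fun y => ψ y + φ y) (hψ1.add h1) (hψ2.add h2) (fun h => hψ3 (by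
          have := h.sub h3
          refine this.congr (Eventually.of_forall fun y => ?_)
          simp only [Pi.sub_apply]; ring))
        have h5 : ∀ y, f y * fderiv ℝ (fun y => ψ y + φ y) y (EuclideanSpace.single i 1) =
            f y * fderiv ℝ ψ y (EuclideanSpace.single i 1) +
            f y * fderiv ℝ φ y (EuclideanSpace.single i 1) := by
          intro y
          rw [fderiv_fun_add (hψ1.differentiable (by simp) y) (h1.differentiable (by simp) y)]
          simp [mul_add]
        simp only [h5] at h4
        rw [integral_add (hfi ψ hψ1 hψ2 i) (hfi φ h1 h2 i), hbad ψ hψ1 hψ2 hψ3, zero_add] at h4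
        exact h4
      · exact hbad φ h1 h2 h3
    have h0 := coord_ineq i f (fun _ => 0) hl (locallyIntegrable_const 0)
      (fun φ h1 h2 => by simp [hz φ h1 h2]) hf2 (by simp)
    simp only [ne_eq, OfNat.ofNat_ne_zero, not_false_eq_true, zero_pow, mul_zero,
      integral_zero] at h0
    have hR : 0 ≤ ∫ y, Real.exp (‖y‖ ^ 2 / 4) * ‖g y‖ ^ 2 :=
      integral_nonneg fun y => by positivity
    have hN0 : (0 : ℝ) ≤ N := Nat.cast_nonneg N
    nlinarith
end

section
/- Weighted Hardy-type inequality: Let N ≥ 1 and K(y) = exp(|y|²/4). There exists a constant c > 0 such that for every locally integrable f : ℝ^N → ℝ with a weak gradient g : ℝ^N → ℝ^N satisfying ∫_{ℝ^N} K(y)|f(y)|² dy < ∞ and ∫_{ℝ^N} K(y)|g(y)|² dy < ∞, one has ∫_{ℝ^N} K(y) |f(y)|² |y|² dy ≤ c ∫_{ℝ^N} K(y) |g(y)|² dy. -/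
open MeasureTheory

namespace Hardy

open Filter Topology

abbrev EN (N : ℕ) := EuclideanSpace ℝ (Fin N)

variable {N : ℕ}

/-- mollification -/
noncomputable def mol (ρ : ContDiffBump (0 : EN N)) (u : EN N → ℝ) (x : EN N) : ℝ :=
  ∫ t, ρ.normed volume (x - t) * u t

lemma mol_eq (ρ : ContDiffBump (0 : EN N)) (u : EN N → ℝ) :
    mol ρ u = convolution (ρ.normed volume) u (ContinuousLinearMap.lsmul ℝ ℝ) volume := by
  ext x
  rw [convolution_lsmul_swap]
  rfl

lemma test_contDiff (ρ : ContDiffBump (0 : EN N)) (x : EN N) :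
    ContDiff ℝ (⊤ : ℕ∞) (fun t => ρ.normed volume (x - t)) :=
  (ρ.contDiff_normed).comp (contDiff_const.sub contDiff_id)

lemma test_compact (ρ : ContDiffBump (0 : EN N)) (x : EN N) :
    HasCompactSupport (fun t => ρ.normed volume (x - t)) :=
  (ρ.hasCompactSupport_normed).comp_homeomorph (Homeomorph.subLeft x)

lemma test_integrable (ρ : ContDiffBump (0 : EN N)) {u : EN N → ℝ}
    (hu : LocallyIntegrable u volume) (x : EN N) :
    Integrable (fun t => ρ.normed volume (x - t) * u t) :=
  hu.integrable_smul_left_of_hasCompactSupport (test_contDiff ρ x).continuous (test_compact ρ x)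

lemma test_integral (ρ : ContDiffBump (0 : EN N)) (x : EN N) :
    ∫ t, ρ.normed volume (x - t) = 1 := by
  rw [integral_sub_left_eq_self (fun t => ρ.normed volume t)]
  exact ρ.integral_normed

lemma mol_sq_le (ρ : ContDiffBump (0 : EN N)) {u : EN N → ℝ}
    (hu : LocallyIntegrable u volume) (hu2 : Integrable (fun y => u y ^ 2)) (x : EN N) :
    mol ρ u x ^ 2 ≤ mol ρ (fun y => u y ^ 2) x := by
  have h1 := test_integrable ρ hu x
  have h2 := test_integrable ρ hu2.locallyIntegrable x
  have h3 : Integrable (fun t => ρ.normed volume (x - t)) :=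
    (test_contDiff ρ x).continuous.integrable_of_hasCompactSupport (test_compact ρ x)
  set m := mol ρ u x with hm
  have h0 : 0 ≤ ∫ t, ρ.normed volume (x - t) * (u t - m) ^ 2 :=
    integral_nonneg fun t => mul_nonneg (ρ.nonneg_normed _) (sq_nonneg _)
  have e : ∀ t, ρ.normed volume (x - t) * (u t - m) ^ 2
      = ρ.normed volume (x - t) * u t ^ 2 - (2 * m) * (ρ.normed volume (x - t) * u t)
        + m ^ 2 * ρ.normed volume (x - t) := fun t => by ring
  simp_rw [e] at h0
  have hs : Integrable (fun t => ρ.normed volume (x - t) * u t ^ 2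
      - (2 * m) * (ρ.normed volume (x - t) * u t)) := h2.sub (h1.const_mul _)
  rw [integral_add hs (h3.const_mul _),
    integral_sub h2 (h1.const_mul _), integral_const_mul, integral_const_mul, test_integral] at h0
  change 0 ≤ mol ρ (fun y => u y ^ 2) x - 2 * m * m + m ^ 2 * 1 at h0
  nlinarith

lemma mol_swap (ρ : ContDiffBump (0 : EN N)) {W h : EN N → ℝ} (hW : Continuous W)
    (hWc : HasCompactSupport W) (hh : Integrable h) :
    Integrable (fun x => W x * mol ρ h x) ∧ ∫ x, W x * mol ρ h x = ∫ y, mol ρ W y * h y := by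
  obtain ⟨C, hC⟩ := hWc.exists_bound_of_continuous hW
  have h1 : Integrable (fun p : EN N × EN N => h p.2 * ρ.normed volume (p.1 - p.2))
      (volume.prod volume) :=
    hh.convolution_integrand (ContinuousLinearMap.mul ℝ ℝ) (ρ.integrable_normed (μ := volume))
  have h2 : Integrable (fun p : EN N × EN N => W p.1 * (h p.2 * ρ.normed volume (p.1 - p.2)))
      (volume.prod volume) :=
    h1.bdd_mul (hW.comp continuous_fst).aestronglyMeasurable
      (Eventually.of_forall fun p => hC p.1)
  have e1 : ∀ x, W x * mol ρ h x = ∫ y, W x * (h y * ρ.normed volume (x - y)) := fun x => by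
    rw [integral_const_mul, mol]
    simp_rw [mul_comm]
  have e2 : ∀ y, mol ρ W y * h y = ∫ x, W x * (h y * ρ.normed volume (x - y)) := fun y => by
    rw [mol, ← integral_mul_const]
    congr 1
    ext x
    rw [← ρ.normed_neg (y - x), neg_sub]
    ring
  simp_rw [e1, e2]
  exact ⟨h2.integral_prod_left, integral_integral_swap h2⟩

/-- the mollifying sequence -/
noncomputable def rho (N : ℕ) (n : ℕ) : ContDiffBump (0 : EN N) where
  rIn := 1 / ((n : ℝ) + 1)
  rOut := 2 * (1 / ((n : ℝ) + 1))
  rIn_pos := by positivity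
  rIn_lt_rOut := by
    have : 0 < 1 / ((n : ℝ) + 1) := by positivity
    linarith

lemma rho_tendsto : Tendsto (fun n => (rho N n).rOut) atTop (𝓝 0) := by
  have := (tendsto_one_div_add_atTop_nhds_zero_nat (𝕜 := ℝ)).const_mul 2
  simpa [rho] using this

lemma mol_ae {u : EN N → ℝ} (hu : LocallyIntegrable u volume) :
    ∀ᵐ x, Tendsto (fun n => mol (rho N n) u x) atTop (𝓝 (u x)) := by
  simp_rw [mol_eq]
  exact ContDiffBump.ae_convolution_tendsto_right_of_locallyIntegrable (K := 2) rho_tendsto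
    (Eventually.of_forall fun n => le_rfl) hu

lemma mol_cont (ρ : ContDiffBump (0 : EN N)) {u : EN N → ℝ} (hu : LocallyIntegrable u volume) :
    ContDiff ℝ (⊤ : ℕ∞) (mol ρ u) := by
  rw [mol_eq]
  exact ρ.hasCompactSupport_normed.contDiff_convolution_left _ ρ.contDiff_normed hu

lemma mol_tendsto {W h : EN N → ℝ} (hW : Continuous W)
    (hWc : HasCompactSupport W) (hh : Integrable h) :
    Tendsto (fun n => ∫ x, W x * mol (rho N n) h x) atTop (𝓝 (∫ x, W x * h x)) := by
  simp_rw [fun n => (mol_swap (rho N n) hW hWc hh).2]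
  obtain ⟨C, hC⟩ := hWc.exists_bound_of_continuous hW
  refine tendsto_integral_of_dominated_convergence (fun x => C * ‖h x‖) (fun n => ?_)
    (hh.norm.const_mul C) (fun n => Eventually.of_forall fun x => ?_)
    (Eventually.of_forall fun x => ?_)
  · exact (mol_cont _ hW.locallyIntegrable).continuous.aestronglyMeasurable.mul
      hh.aestronglyMeasurable
  · rw [norm_mul]
    refine mul_le_mul_of_nonneg_right ?_ (norm_nonneg _)
    have h3 : Integrable (fun t => (rho N n).normed volume (x - t)) :=
      (test_contDiff _ x).continuous.integrable_of_hasCompactSupport (test_compact _ x)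
    calc ‖mol (rho N n) W x‖ ≤ ∫ t, (rho N n).normed volume (x - t) * C := by
          refine norm_integral_le_of_norm_le (h3.mul_const C) (Eventually.of_forall fun t => ?_)
          rw [norm_mul, Real.norm_of_nonneg ((rho N n).nonneg_normed _)]
          exact mul_le_mul_of_nonneg_left (hC t) ((rho N n).nonneg_normed _)
      _ = C := by rw [integral_mul_const, test_integral, one_mul]
  · refine Tendsto.mul_const _ ?_
    simp_rw [mol_eq]
    exact ContDiffBump.convolution_tendsto_right_of_continuous rho_tendsto hW x

lemma mol_fderiv (ρ : ContDiffBump (0 : EN N)) {f h : EN N → ℝ} {e : EN N}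
    (hf : LocallyIntegrable f volume)
    (hw : ∀ φ : EN N → ℝ, ContDiff ℝ (⊤ : ℕ∞) φ → HasCompactSupport φ →
      ∫ y, f y * fderiv ℝ φ y e = -∫ y, h y * φ y) (x : EN N) :
    fderiv ℝ (mol ρ f) x e = mol ρ h x := by
  have hρ1 : ContDiff ℝ 1 (ρ.normed volume) := ρ.contDiff_normed (n := 1)
  have h1 := (ρ.hasCompactSupport_normed (μ := volume)).hasFDerivAt_convolution_left
    (ContinuousLinearMap.lsmul ℝ ℝ) hρ1 hf x
  rw [← mol_eq] at h1
  have hd : ∀ t, fderiv ℝ (fun t => ρ.normed volume (x - t)) t e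
      = - fderiv ℝ (ρ.normed volume) (x - t) e := fun t => by
    have hD : HasFDerivAt (ρ.normed volume) (fderiv ℝ (ρ.normed volume) (x - t)) (x - t) :=
      (hρ1.differentiable one_ne_zero _).hasFDerivAt
    have := hD.comp t ((hasFDerivAt_id t).const_sub x)
    have this : HasFDerivAt (fun t => ρ.normed volume (x - t)) _ t := this
    rw [this.fderiv]
    simp
  have hint : Integrable (fun t => (ContinuousLinearMap.precompL (EN N)
      (ContinuousLinearMap.lsmul ℝ ℝ : ℝ →L[ℝ] ℝ →L[ℝ] ℝ)) (fderiv ℝ (ρ.normed volume) (x - t))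
      (f t)) := by
    have := (ρ.hasCompactSupport_normed (μ := volume)).fderiv (𝕜 := ℝ)
    have := (this.convolutionExists_left (ContinuousLinearMap.precompL (EN N)
      (ContinuousLinearMap.lsmul ℝ ℝ : ℝ →L[ℝ] ℝ →L[ℝ] ℝ)) (hρ1.continuous_fderiv one_ne_zero) hf x)
    exact this.integrable_swap
  have key := hw _ (test_contDiff ρ x) (test_compact ρ x)
  simp_rw [hd] at key
  rw [h1.fderiv, convolution_eq_swap, ContinuousLinearMap.integral_apply hint]
  simp only [ContinuousLinearMap.precompL_apply, ContinuousLinearMap.lsmul_apply]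
  rw [mol]
  simp_rw [mul_neg, integral_neg, neg_inj] at key
  simp_rw [smul_eq_mul, mul_comm] at key ⊢
  simpa [mul_comm] using key

/-- weight -/
noncomputable def kap (y : EN N) : ℝ := Real.exp (‖y‖ ^ 2 / 4)

lemma kap_pos (y : EN N) : 0 < kap y := Real.exp_pos _

lemma one_le_kap (y : EN N) : 1 ≤ kap y := Real.one_le_exp (by positivity)

lemma kap_cont : Continuous (kap (N := N)) := by
  unfold kap
  fun_prop

lemma kap_deriv (y : EN N) (i : Fin N) :
    ∃ L : EN N →L[ℝ] ℝ, HasFDerivAt kap L y ∧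
      L (EuclideanSpace.single i 1) = kap y * (y i / 2) := by
  have h1 : HasFDerivAt (fun y : EN N => ‖y‖ ^ 2) (2 • (innerSL ℝ y)) y :=
    (hasStrictFDerivAt_norm_sq y).hasFDerivAt
  have h2 := (h1.mul_const (1 / 4 : ℝ)).exp
  have hk : (fun y : EN N => Real.exp (‖y‖ ^ 2 * (1 / 4))) = kap := by
    ext y
    simp [kap, div_eq_mul_inv]
  rw [hk] at h2
  refine ⟨_, h2, ?_⟩
  simp [kap, EuclideanSpace.inner_single_right]
  ring_nf

lemma smooth_ineq {F η : EN N → ℝ} (i : Fin N) (hF : ContDiff ℝ (⊤ : ℕ∞) F)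
    (hη : ContDiff ℝ (⊤ : ℕ∞) η) (hηc : HasCompactSupport η) (hη0 : ∀ y, 0 ≤ η y) :
    ∫ y, kap y * η y * y i ^ 2 * F y ^ 2 ≤
      16 * (∫ y, kap y * η y * fderiv ℝ F y (EuclideanSpace.single i 1) ^ 2)
      + 4 * ∫ y, kap y * |y i * fderiv ℝ η y (EuclideanSpace.single i 1)| * F y ^ 2 := by
  set e : EN N := EuclideanSpace.single i 1 with he
  have hFd : Differentiable ℝ F := hF.differentiable (by simp)
  have hηd : Differentiable ℝ η := hη.differentiable (by simp)
  have cF := hF.continuous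
  have cη := hη.continuous
  have cF' : Continuous fun y => fderiv ℝ F y e :=
    (hF.continuous_fderiv (by simp)).clm_apply continuous_const
  have cη' : Continuous fun y => fderiv ℝ η y e :=
    (hη.continuous_fderiv (by simp)).clm_apply continuous_const
  have cκ := kap_cont (N := N)
  have ci : Continuous fun y : EN N => y i := by fun_prop
  have sη' : HasCompactSupport fun y => fderiv ℝ η y e := hηc.fderiv_apply (𝕜 := ℝ) e
  have int1 : ∀ G : EN N → ℝ, Continuous G → Integrable fun y => η y * G y := fun G hG =>
    (cη.mul hG).integrable_of_hasCompactSupport hηc.mul_right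
  have int2 : ∀ G : EN N → ℝ, Continuous G → Integrable fun y => fderiv ℝ η y e * G y :=
    fun G hG => (cη'.mul hG).integrable_of_hasCompactSupport sη'.mul_right
  have dF : ∀ y, fderiv ℝ (fun y => F y ^ 2) y e = 2 * F y * fderiv ℝ F y e := fun y => by
    have := (hFd y).hasFDerivAt.pow 2
    rw [this.fderiv]
    simp
  have dV0 : ∀ y, ∃ L : EN N →L[ℝ] ℝ, HasFDerivAt (fun y => kap y * η y * y i) L y ∧
      L e = kap y * (y i / 2) * η y * y i + kap y * fderiv ℝ η y e * y i + kap y * η y := by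
    intro y
    obtain ⟨L, hL, hLe⟩ := kap_deriv y i
    have hi : HasFDerivAt (fun y : EN N => y i) (EuclideanSpace.proj i : EN N →L[ℝ] ℝ) y :=
      (EuclideanSpace.proj i : EN N →L[ℝ] ℝ).hasFDerivAt
    refine ⟨_, (hL.mul (hηd y).hasFDerivAt).mul hi, ?_⟩
    simp [hLe, he]
    rw [← he]
    ring
  have dV : ∀ y, fderiv ℝ (fun y => kap y * η y * y i) y e
      = kap y * (y i / 2) * η y * y i + kap y * fderiv ℝ η y e * y i + kap y * η y := fun y => by
    obtain ⟨L, hL, hLe⟩ := dV0 y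
    rw [hL.fderiv, hLe]
  have iA : Integrable fun y => kap y * η y * y i ^ 2 * F y ^ 2 :=
    (int1 (fun y => kap y * y i ^ 2 * F y ^ 2) (by fun_prop)).congr
      (Eventually.of_forall fun y => by ring)
  have iB : Integrable fun y => F y ^ 2 * (kap y * fderiv ℝ η y e * y i) :=
    (int2 (fun y => kap y * y i * F y ^ 2) (by fun_prop)).congr
      (Eventually.of_forall fun y => by ring)
  have iC : Integrable fun y => F y ^ 2 * (kap y * η y) :=
    (int1 (fun y => kap y * F y ^ 2) (by fun_prop)).congr
      (Eventually.of_forall fun y => by ring)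
  have iD : Integrable fun y => 2 * F y * fderiv ℝ F y e * (kap y * η y * y i) :=
    (int1 (fun y => 2 * F y * fderiv ℝ F y e * kap y * y i) (by fun_prop)).congr
      (Eventually.of_forall fun y => by ring)
  have iE : Integrable fun y => kap y * η y * fderiv ℝ F y e ^ 2 :=
    (int1 (fun y => kap y * fderiv ℝ F y e ^ 2) (by fun_prop)).congr
      (Eventually.of_forall fun y => by ring)
  have iV : Integrable fun y => F y ^ 2 * (kap y * η y * y i) :=
    (int1 (fun y => kap y * y i * F y ^ 2) (by fun_prop)).congr
      (Eventually.of_forall fun y => by ring)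
  have iB' : Integrable fun y => kap y * |y i * fderiv ℝ η y e| * F y ^ 2 := by
    refine iB.norm.congr (Eventually.of_forall fun y => ?_)
    simp only [Real.norm_eq_abs, abs_mul, abs_of_pos (kap_pos y), abs_of_nonneg (sq_nonneg (F y))]
    ring
  have ibp := integral_mul_fderiv_eq_neg_fderiv_mul_of_integrable (μ := volume) (v := e)
    (f := fun y => F y ^ 2) (g := fun y => kap y * η y * y i)
    (by simp_rw [dF]; exact iD)
    (by
      simp_rw [dV]
      refine (((iA.const_mul (1 / 2)).add iB).add iC).congr (Eventually.of_forall fun y => ?_)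
      simp only [Pi.add_apply]
      ring)
    iV (fun y _ => (hFd y).pow 2)
    (fun y _ => by obtain ⟨L, hL, -⟩ := dV0 y; exact hL.differentiableAt)
  simp_rw [dF, dV] at ibp
  have hle : ∫ y, (kap y * η y * y i ^ 2 * F y ^ 2) ≤ ∫ y, (16 * (kap y * η y * fderiv ℝ F y e ^ 2)
      + 4 * (kap y * |y i * fderiv ℝ η y e| * F y ^ 2)
      + (4 * (F y ^ 2 * (kap y * (y i / 2) * η y * y i + kap y * fderiv ℝ η y e * y i + kap y * η y))
      + 4 * (2 * F y * fderiv ℝ F y e * (kap y * η y * y i)))) := by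
    refine integral_mono iA ?_ fun y => ?_
    · refine ((iE.const_mul 16).add (iB'.const_mul 4)).add
        (Integrable.add (Integrable.const_mul ?_ 4) (iD.const_mul 4))
      refine (((iA.const_mul (1 / 2)).add iB).add iC).congr (Eventually.of_forall fun y => ?_)
      simp only [Pi.add_apply]
      ring
    · have hp : 0 ≤ kap y * η y := mul_nonneg (kap_pos y).le (hη0 y)
      have h1 : 0 ≤ kap y * F y ^ 2 * (|y i * fderiv ℝ η y e| + y i * fderiv ℝ η y e) :=
        mul_nonneg (mul_nonneg (kap_pos y).le (sq_nonneg _))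
          (by linarith [neg_abs_le (y i * fderiv ℝ η y e)])
      have h2 : 0 ≤ kap y * η y * (y i * F y + 4 * fderiv ℝ F y e) ^ 2 :=
        mul_nonneg hp (sq_nonneg _)
      have h3 : 0 ≤ kap y * η y * F y ^ 2 := mul_nonneg hp (sq_nonneg _)
      nlinarith
  rw [integral_add, integral_add, integral_add, integral_const_mul, integral_const_mul,
    integral_const_mul, integral_const_mul, ibp] at hle
  · linarith
  · refine Integrable.const_mul ?_ 4
    refine (((iA.const_mul (1 / 2)).add iB).add iC).congr (Eventually.of_forall fun y => ?_)
    simp only [Pi.add_apply]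
    ring
  · exact iD.const_mul 4
  · exact iE.const_mul 16
  · exact iB'.const_mul 4
  · exact (iE.const_mul 16).add (iB'.const_mul 4)
  · refine Integrable.add (Integrable.const_mul ?_ 4) (iD.const_mul 4)
    refine (((iA.const_mul (1 / 2)).add iB).add iC).congr (Eventually.of_forall fun y => ?_)
    simp only [Pi.add_apply]
    ring

lemma lim_ineq {f h η : EN N → ℝ} (i : Fin N) (hf : LocallyIntegrable f volume)
    (hf2 : Integrable (fun y => f y ^ 2)) (hh : AEStronglyMeasurable h volume)
    (hh2 : Integrable (fun y => h y ^ 2))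
    (hw : ∀ φ : EN N → ℝ, ContDiff ℝ (⊤ : ℕ∞) φ → HasCompactSupport φ →
      ∫ y, f y * fderiv ℝ φ y (EuclideanSpace.single i 1) = -∫ y, h y * φ y)
    (hη : ContDiff ℝ (⊤ : ℕ∞) η) (hηc : HasCompactSupport η) (hη0 : ∀ y, 0 ≤ η y) :
    ∫⁻ y, ENNReal.ofReal (kap y * η y * y i ^ 2 * f y ^ 2) ≤
      ENNReal.ofReal (16 * (∫ y, kap y * η y * h y ^ 2)
      + 4 * ∫ y, kap y * |y i * fderiv ℝ η y (EuclideanSpace.single i 1)| * f y ^ 2) := by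
  have hhl : LocallyIntegrable h volume :=
    ((memLp_two_iff_integrable_sq hh).2 hh2).locallyIntegrable (by norm_num)
  set e : EN N := EuclideanSpace.single i 1 with he
  have cη := hη.continuous
  have cη' : Continuous fun y => fderiv ℝ η y e :=
    (hη.continuous_fderiv (by simp)).clm_apply continuous_const
  have cκ := kap_cont (N := N)
  have ci : Continuous fun y : EN N => y i := by fun_prop
  have sη' : HasCompactSupport fun y => fderiv ℝ η y e := hηc.fderiv_apply (𝕜 := ℝ) e
  set A : EN N → ℝ := fun y => kap y * η y with hA
  set B : EN N → ℝ := fun y => kap y * |y i * fderiv ℝ η y e| with hB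
  have cA : Continuous A := by fun_prop
  have cB : Continuous B := by fun_prop
  have sA : HasCompactSupport A := hηc.mul_left
  have sB : HasCompactSupport B := by
    have h1 : HasCompactSupport fun y : EN N => y i * fderiv ℝ η y e := sη'.mul_left
    exact (h1.norm).mul_left
  have A0 : ∀ y, 0 ≤ A y := fun y => mul_nonneg (kap_pos y).le (hη0 y)
  have B0 : ∀ y, 0 ≤ B y := fun y => mul_nonneg (kap_pos y).le (abs_nonneg _)
  have bd : ∀ (W u : EN N → ℝ), Continuous W → HasCompactSupport W → (∀ y, 0 ≤ W y) →
      LocallyIntegrable u volume → Integrable (fun y => u y ^ 2) → ∀ n,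
      ∫ y, W y * mol (rho N n) u y ^ 2 ≤ ∫ y, W y * mol (rho N n) (fun z => u z ^ 2) y := by
    intro W u cW sW W0 hu hu2 n
    refine integral_mono ?_ (mol_swap _ cW sW hu2).1 fun y => ?_
    · exact (cW.mul ((mol_cont _ hu).continuous.pow 2)).integrable_of_hasCompactSupport sW.mul_right
    · exact mul_le_mul_of_nonneg_left (mol_sq_le _ hu hu2 y) (W0 y)
  set a : ℕ → ℝ := fun n => 16 * (∫ y, A y * mol (rho N n) (fun z => h z ^ 2) y)
    + 4 * ∫ y, B y * mol (rho N n) (fun z => f z ^ 2) y with ha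
  have hlim : Tendsto a atTop (𝓝 (16 * (∫ y, A y * h y ^ 2) + 4 * ∫ y, B y * f y ^ 2)) :=
    ((mol_tendsto cA sA hh2).const_mul 16).add ((mol_tendsto cB sB hf2).const_mul 4)
  have hn : ∀ n, ∫⁻ y, ENNReal.ofReal (A y * y i ^ 2 * mol (rho N n) f y ^ 2)
      ≤ ENNReal.ofReal (a n) := by
    intro n
    have cM := (mol_cont (rho N n) hf).continuous
    rw [← ofReal_integral_eq_lintegral_ofReal]
    · refine ENNReal.ofReal_le_ofReal ?_
      refine (smooth_ineq i (mol_cont (rho N n) hf) hη hηc hη0).trans ?_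
      rw [← he]
      simp_rw [mol_fderiv (rho N n) hf hw]
      have b1 := bd A h cA sA A0 hhl hh2 n
      have b2 := bd B f cB sB B0 hf hf2 n
      simp only [ha]
      linarith
    · have c : Continuous fun y => A y * y i ^ 2 * mol (rho N n) f y ^ 2 := by fun_prop
      exact c.integrable_of_hasCompactSupport (sA.mul_right).mul_right
    · exact Eventually.of_forall fun y => mul_nonneg (mul_nonneg (A0 y) (sq_nonneg _)) (sq_nonneg _)
  calc ∫⁻ y, ENNReal.ofReal (A y * y i ^ 2 * f y ^ 2)
      = ∫⁻ y, liminf (fun n => ENNReal.ofReal (A y * y i ^ 2 * mol (rho N n) f y ^ 2)) atTop := by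
        refine lintegral_congr_ae ?_
        filter_upwards [mol_ae hf] with y hy
        exact (ENNReal.tendsto_ofReal ((hy.pow 2).const_mul _)).liminf_eq.symm
    _ ≤ liminf (fun n => ∫⁻ y, ENNReal.ofReal (A y * y i ^ 2 * mol (rho N n) f y ^ 2)) atTop := by
        refine lintegral_liminf_le fun n => ?_
        have cM := (mol_cont (rho N n) hf).continuous
        have c : Continuous fun y => A y * y i ^ 2 * mol (rho N n) f y ^ 2 := by fun_prop
        exact c.measurable.ennreal_ofReal
    _ ≤ liminf (fun n => ENNReal.ofReal (a n)) atTop := liminf_le_liminf (Eventually.of_forall hn)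
    _ = _ := (ENNReal.tendsto_ofReal hlim).liminf_eq

lemma comp_ineq {f h : EN N → ℝ} (i : Fin N) (hf : LocallyIntegrable f volume)
    (hf2 : Integrable (fun y => kap y * f y ^ 2)) (hh : AEStronglyMeasurable h volume)
    (hh2 : Integrable (fun y => kap y * h y ^ 2))
    (hw : ∀ φ : EN N → ℝ, ContDiff ℝ (⊤ : ℕ∞) φ → HasCompactSupport φ →
      ∫ y, f y * fderiv ℝ φ y (EuclideanSpace.single i 1) = -∫ y, h y * φ y) :
    Integrable (fun y => kap y * f y ^ 2 * y i ^ 2) ∧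
    ∫ y, kap y * f y ^ 2 * y i ^ 2 ≤ 16 * ∫ y, kap y * h y ^ 2 := by
  have low : ∀ u : EN N → ℝ, AEStronglyMeasurable u volume →
      Integrable (fun y => kap y * u y ^ 2) → Integrable (fun y => u y ^ 2) := by
    intro u hu hu2
    refine hu2.mono (hu.pow 2) (Eventually.of_forall fun y => ?_)
    rw [Real.norm_of_nonneg (sq_nonneg _),
      Real.norm_of_nonneg (mul_nonneg (kap_pos y).le (sq_nonneg _))]
    nlinarith [one_le_kap y, sq_nonneg (u y)]
  have hfm := hf.aestronglyMeasurable
  have cκ := kap_cont (N := N)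
  have ci : Continuous fun y : EN N => y i := by fun_prop
  set e : EN N := EuclideanSpace.single i 1 with he
  set η : EN N → ℝ := fun y => rho N 0 y with hη
  have ηs : ContDiff ℝ (⊤ : ℕ∞) η := (rho N 0).contDiff
  have ηc : HasCompactSupport η := (rho N 0).hasCompactSupport
  have η0 : ∀ y, 0 ≤ η y := fun y => (rho N 0).nonneg
  have η1 : ∀ y, η y ≤ 1 := fun y => (rho N 0).le_one
  have ηz : η 0 = 1 := (rho N 0).one_of_mem_closedBall (by simp [rho])
  have cη := ηs.continuous
  have cη' : Continuous fun y => fderiv ℝ η y e :=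
    (ηs.continuous_fderiv (by simp)).clm_apply continuous_const
  set β : EN N → ℝ := fun z => z i * fderiv ℝ η z e with hβ
  have cβ : Continuous β := by fun_prop
  have sβ : HasCompactSupport β := (ηc.fderiv_apply (𝕜 := ℝ) e).mul_left
  obtain ⟨C, hC⟩ := sβ.exists_bound_of_continuous cβ
  have β0 : β 0 = 0 := by simp [hβ]
  set r : ℕ → ℝ := fun n => 1 / ((n : ℝ) + 1) with hr
  have rpos : ∀ n, 0 < r n := fun n => by simp only [hr]; positivity
  have rlim : Tendsto r atTop (𝓝 0) := tendsto_one_div_add_atTop_nhds_zero_nat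
  have rl : ∀ y : EN N, Tendsto (fun n => r n • y) atTop (𝓝 0) := fun y => by
    simpa using rlim.smul_const y
  have ηns : ∀ n, ContDiff ℝ (⊤ : ℕ∞) (fun y => η (r n • y)) := fun n =>
    ηs.comp (contDiff_id.const_smul (r n))
  have ηnc : ∀ n, HasCompactSupport (fun y => η (r n • y)) := fun n =>
    ηc.comp_smul (rpos n).ne'
  have ηnd : ∀ n y, y i * fderiv ℝ (fun y => η (r n • y)) y e = β (r n • y) := by
    intro n y
    have hD : HasFDerivAt η (fderiv ℝ η (r n • y)) (r n • y) :=
      (ηs.differentiable (by simp) _).hasFDerivAt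
    have h1 : HasFDerivAt (fun y => η (r n • y)) _ y :=
      hD.comp y ((hasFDerivAt_id y).const_smul (r n))
    rw [h1.fderiv]
    simp [hβ]
    ring
  set b : ℕ → ℝ := fun n => ∫ y, kap y * |β (r n • y)| * f y ^ 2 with hb
  have blim : Tendsto b atTop (𝓝 0) := by
    have : Tendsto b atTop (𝓝 (∫ y : EN N, (0 : ℝ))) := by
      refine tendsto_integral_of_dominated_convergence (fun y => C * (kap y * f y ^ 2))
        (fun n => ?_) (hf2.const_mul C) (fun n => Eventually.of_forall fun y => ?_)
        (Eventually.of_forall fun y => ?_)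
      · have c : Continuous fun y => kap y * |β (r n • y)| := by fun_prop
        exact c.aestronglyMeasurable.mul (hfm.pow 2)
      · rw [norm_mul, norm_mul, Real.norm_of_nonneg (kap_pos y).le,
          Real.norm_of_nonneg (sq_nonneg (f y)), norm_abs_eq_norm]
        have := hC (r n • y)
        have h2 : 0 ≤ kap y * f y ^ 2 := mul_nonneg (kap_pos y).le (sq_nonneg _)
        nlinarith
      · have h1 : Tendsto (fun n => β (r n • y)) atTop (𝓝 (β 0)) :=
          (cβ.tendsto 0).comp (rl y)
        rw [β0] at h1
        simpa using (h1.abs.const_mul (kap y)).mul_const (f y ^ 2)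
    simpa using this
  have hn : ∀ n, ∫⁻ y, ENNReal.ofReal (kap y * η (r n • y) * y i ^ 2 * f y ^ 2) ≤
      ENNReal.ofReal (16 * (∫ y, kap y * h y ^ 2) + 4 * b n) := by
    intro n
    refine (lim_ineq i hf (low f hfm hf2) hh (low h hh hh2) hw (ηns n) (ηnc n)
      (fun y => η0 _)).trans (ENNReal.ofReal_le_ofReal ?_)
    rw [← he]
    simp_rw [ηnd]
    have : ∫ y, kap y * η (r n • y) * h y ^ 2 ≤ ∫ y, kap y * h y ^ 2 := by
      refine integral_mono_of_nonneg (Eventually.of_forall fun y => ?_) hh2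
        (Eventually.of_forall fun y => ?_)
      · exact mul_nonneg (mul_nonneg (kap_pos y).le (η0 _)) (sq_nonneg _)
      · have h2 : 0 ≤ kap y * h y ^ 2 := mul_nonneg (kap_pos y).le (sq_nonneg _)
        have := η1 (r n • y)
        change kap y * η (r n • y) * h y ^ 2 ≤ kap y * h y ^ 2
        nlinarith
    simp only [hb]
    linarith
  have hlim : Tendsto (fun n => 16 * (∫ y, kap y * h y ^ 2) + 4 * b n) atTop
      (𝓝 (16 * (∫ y, kap y * h y ^ 2))) := by
    simpa using (blim.const_mul 4).const_add (16 * (∫ y, kap y * h y ^ 2))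
  have fin : ∫⁻ y, ENNReal.ofReal (kap y * f y ^ 2 * y i ^ 2)
      ≤ ENNReal.ofReal (16 * ∫ y, kap y * h y ^ 2) := by
    calc
    ∫⁻ y, ENNReal.ofReal (kap y * f y ^ 2 * y i ^ 2)
      = ∫⁻ y, liminf (fun n =>
          ENNReal.ofReal (kap y * η (r n • y) * y i ^ 2 * f y ^ 2)) atTop := by
        refine lintegral_congr fun y => ?_
        have h1 : Tendsto (fun n => η (r n • y)) atTop (𝓝 (η 0)) := (cη.tendsto 0).comp (rl y)
        rw [ηz] at h1
        have h2 := ((h1.const_mul (kap y)).mul_const (y i ^ 2)).mul_const (f y ^ 2)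
        rw [(ENNReal.tendsto_ofReal h2).liminf_eq]
        congr 1
        ring
    _ ≤ liminf (fun n => ∫⁻ y,
          ENNReal.ofReal (kap y * η (r n • y) * y i ^ 2 * f y ^ 2)) atTop := by
        refine lintegral_liminf_le' fun n => ?_
        have c : Continuous fun y => kap y * η (r n • y) * y i ^ 2 := by fun_prop
        exact (c.aestronglyMeasurable.mul (hfm.pow 2)).aemeasurable.ennreal_ofReal
    _ ≤ liminf (fun n => ENNReal.ofReal (16 * (∫ y, kap y * h y ^ 2) + 4 * b n)) atTop :=
        liminf_le_liminf (Eventually.of_forall hn)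
    _ = _ := (ENNReal.tendsto_ofReal hlim).liminf_eq
  have nn : ∀ y : EN N, 0 ≤ kap y * f y ^ 2 * y i ^ 2 := fun y =>
    mul_nonneg (mul_nonneg (kap_pos y).le (sq_nonneg _)) (sq_nonneg _)
  have meas : AEStronglyMeasurable (fun y => kap y * f y ^ 2 * y i ^ 2) volume :=
    (cκ.aestronglyMeasurable.mul (hfm.pow 2)).mul (ci.pow 2).aestronglyMeasurable
  have int : Integrable (fun y => kap y * f y ^ 2 * y i ^ 2) := by
    refine ⟨meas, ?_⟩
    rw [hasFiniteIntegral_iff_ofReal (Eventually.of_forall nn)]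
    exact fin.trans_lt ENNReal.ofReal_lt_top
  refine ⟨int, ?_⟩
  rw [← ofReal_integral_eq_lintegral_ofReal int (Eventually.of_forall nn)] at fin
  refine (ENNReal.ofReal_le_ofReal_iff ?_).1 fin
  exact mul_nonneg (by norm_num) (integral_nonneg fun y =>
    mul_nonneg (kap_pos y).le (sq_nonneg _))

lemma fix_component {f h : EN N → ℝ} (e : EN N) (hf : LocallyIntegrable f volume)
    (hw : ∀ φ : EN N → ℝ, ContDiff ℝ (⊤ : ℕ∞) φ → HasCompactSupport φ →
      ∫ y, f y * fderiv ℝ φ y e = -∫ y, h y * φ y)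
    (hh : ¬ AEStronglyMeasurable h volume) :
    ∀ φ : EN N → ℝ, ContDiff ℝ (⊤ : ℕ∞) φ → HasCompactSupport φ →
      ∫ y, f y * fderiv ℝ φ y e = 0 := by
  -- some test function makes the product non-measurable
  have ex : ∃ ψ : EN N → ℝ, ContDiff ℝ (⊤ : ℕ∞) ψ ∧ HasCompactSupport ψ ∧
      ¬ AEStronglyMeasurable (fun y => h y * ψ y) volume := by
    by_contra! hcon
    apply hh
    have hη := fun n : ℕ => hcon (fun y => rho N 0 ((1 / ((n : ℝ) + 1)) • y))
      ((rho N 0).contDiff.comp (contDiff_id.const_smul (1 / ((n : ℝ) + 1))))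
      ((rho N 0).hasCompactSupport.comp_smul (by positivity))
    refine aestronglyMeasurable_of_tendsto_ae atTop hη (Eventually.of_forall fun y => ?_)
    have rl : Tendsto (fun n : ℕ => (1 / ((n : ℝ) + 1)) • y) atTop (𝓝 0) := by
      simpa using (tendsto_one_div_add_atTop_nhds_zero_nat (𝕜 := ℝ)).smul_const y
    have h1 := ((rho N 0).continuous.tendsto 0).comp rl
    have ηz : rho N 0 0 = 1 := (rho N 0).one_of_mem_closedBall (by simp [rho])
    rw [ηz] at h1
    simpa using h1.const_mul (h y)
  obtain ⟨ψ, ψs, ψc, hψ⟩ := ex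
  have zero : ∀ φ : EN N → ℝ, ContDiff ℝ (⊤ : ℕ∞) φ → HasCompactSupport φ →
      ¬ AEStronglyMeasurable (fun y => h y * φ y) volume →
      ∫ y, f y * fderiv ℝ φ y e = 0 := fun φ h1 h2 h3 => by
    rw [hw φ h1 h2, integral_undef fun hi => h3 hi.aestronglyMeasurable, neg_zero]
  intro φ φs φc
  by_cases hm : AEStronglyMeasurable (fun y => h y * φ y) volume
  swap
  · exact zero φ φs φc hm
  have hsum := zero (fun y => φ y + ψ y) (φs.add ψs) (φc.add ψc) fun hsm => hψ <| by
    refine (hsm.sub hm).congr (Eventually.of_forall fun y => ?_)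
    simp only [Pi.sub_apply]
    ring
  have hψ0 := zero ψ ψs ψc hψ
  have int : ∀ χ : EN N → ℝ, ContDiff ℝ (⊤ : ℕ∞) χ → HasCompactSupport χ →
      Integrable fun y => f y * fderiv ℝ χ y e := fun χ χs χc =>
    hf.integrable_smul_right_of_hasCompactSupport
      ((χs.continuous_fderiv (by simp)).clm_apply continuous_const) (χc.fderiv_apply (𝕜 := ℝ) e)
  have e1 : ∀ y, f y * fderiv ℝ (fun y => φ y + ψ y) y e
      = f y * fderiv ℝ φ y e + f y * fderiv ℝ ψ y e := fun y => by
    rw [fderiv_fun_add (φs.differentiable (by simp) y) (ψs.differentiable (by simp) y)]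
    simp [mul_add]
  simp_rw [e1] at hsum
  rw [integral_add (int φ φs φc) (int ψ ψs ψc), hψ0, add_zero] at hsum
  exact hsum

end Hardy

/-- Weighted Hardy-type inequality. -/
theorem stmt_7 (N : ℕ) (hN : 1 ≤ N) :
    ∃ c > (0 : ℝ),
      ∀ (f : EuclideanSpace ℝ (Fin N) → ℝ)
        (g : EuclideanSpace ℝ (Fin N) → EuclideanSpace ℝ (Fin N)),
        HasWeakGradient f g →
        Integrable (fun y : EuclideanSpace ℝ (Fin N) =>
          Real.exp (‖y‖ ^ 2 / 4) * (f y) ^ 2) →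
        Integrable (fun y : EuclideanSpace ℝ (Fin N) =>
          Real.exp (‖y‖ ^ 2 / 4) * ‖g y‖ ^ 2) →
        Integrable (fun y : EuclideanSpace ℝ (Fin N) =>
          Real.exp (‖y‖ ^ 2 / 4) * (f y) ^ 2 * ‖y‖ ^ 2) ∧
        ∫ y : EuclideanSpace ℝ (Fin N), Real.exp (‖y‖ ^ 2 / 4) * (f y) ^ 2 * ‖y‖ ^ 2
          ≤ c * ∫ y : EuclideanSpace ℝ (Fin N), Real.exp (‖y‖ ^ 2 / 4) * ‖g y‖ ^ 2 := by
  refine ⟨16, by norm_num, fun f g hfg hf2 hg2 => ?_⟩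
  obtain ⟨hf, hw⟩ := hfg
  classical
  have hsq : ∀ z : EuclideanSpace ℝ (Fin N), ‖z‖ ^ 2 = ∑ i, z i ^ 2 := fun z =>
    EuclideanSpace.real_norm_sq_eq z
  -- componentwise replacement of the weak derivative by a measurable one
  have comp : ∀ i : Fin N, ∃ h : EuclideanSpace ℝ (Fin N) → ℝ, AEStronglyMeasurable h volume ∧
      (∀ y, h y ^ 2 ≤ g y i ^ 2) ∧
      (∀ φ : EuclideanSpace ℝ (Fin N) → ℝ, ContDiff ℝ (⊤ : ℕ∞) φ → HasCompactSupport φ →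
        ∫ y, f y * fderiv ℝ φ y (EuclideanSpace.single i 1) = -∫ y, h y * φ y) := by
    intro i
    by_cases hm : AEStronglyMeasurable (fun y => g y i) volume
    · exact ⟨fun y => g y i, hm, fun y => le_rfl, fun φ h1 h2 => hw φ h1 h2 i⟩
    · refine ⟨fun _ => 0, aestronglyMeasurable_const, fun y => by simpa using sq_nonneg (g y i), fun φ h1 h2 => ?_⟩
      rw [Hardy.fix_component (h := fun y => g y i) _ hf (fun φ h1 h2 => hw φ h1 h2 i) hm φ h1 h2]
      simp
  choose h hm hle hwh using comp
  have hint : ∀ i, Integrable (fun y => Hardy.kap y * h i y ^ 2) := by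
    intro i
    refine hg2.mono (Hardy.kap_cont.aestronglyMeasurable.mul ((hm i).pow 2))
      (Filter.Eventually.of_forall fun y => ?_)
    have hk := (Hardy.kap_pos y).le
    rw [Real.norm_of_nonneg (mul_nonneg hk (sq_nonneg _)), Real.norm_of_nonneg (by positivity)]
    refine mul_le_mul_of_nonneg_left ((hle i y).trans ?_) hk
    rw [hsq]
    exact Finset.single_le_sum (f := fun j => g y j ^ 2) (fun j _ => sq_nonneg _)
      (Finset.mem_univ i)
  have main := fun i => Hardy.comp_ineq i hf hf2 (hm i) (hint i) (hwh i)
  have e1 : (fun y : EuclideanSpace ℝ (Fin N) => Real.exp (‖y‖ ^ 2 / 4) * (f y) ^ 2 * ‖y‖ ^ 2)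
      = fun y => ∑ i, Hardy.kap y * f y ^ 2 * y i ^ 2 := by
    ext y
    rw [← Finset.mul_sum, ← hsq]
    rfl
  rw [e1]
  refine ⟨integrable_finsetSum _ fun i _ => (main i).1, ?_⟩
  rw [integral_finsetSum _ fun i _ => (main i).1]
  calc ∑ i, ∫ y, Hardy.kap y * f y ^ 2 * y i ^ 2
      ≤ ∑ i, 16 * ∫ y, Hardy.kap y * h i y ^ 2 := Finset.sum_le_sum fun i _ => (main i).2
    _ = 16 * ∫ y, ∑ i, Hardy.kap y * h i y ^ 2 := by
        rw [integral_finsetSum _ fun i _ => hint i, Finset.mul_sum]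
    _ ≤ _ := by
        refine mul_le_mul_of_nonneg_left ?_ (by norm_num)
        refine integral_mono (integrable_finsetSum _ fun i _ => hint i) hg2 fun y => ?_
        change ∑ i, Hardy.kap y * h i y ^ 2 ≤ Hardy.kap y * ‖g y‖ ^ 2
        rw [← Finset.mul_sum, hsq]
        exact mul_le_mul_of_nonneg_left (Finset.sum_le_sum fun i _ => hle i y)
          (Hardy.kap_pos y).le
end

section
/- Compactness of the embedding H¹(K) ↪ L²(K): Let N ≥ 1 and K(y) = exp(|y|²/4). Let (f_m)_{m∈ℕ} be a sequence of locally integrable functions f_m : ℝ^N → ℝ, each with a weak gradient g_m : ℝ^N → ℝ^N, such that sup_m ( ∫_{ℝ^N} K(y)|f_m(y)|² dy + ∫_{ℝ^N} K(y)|g_m(y)|² dy ) < ∞. Then there exist a subsequence (f_{m_k}) and a function f with ∫_{ℝ^N} K(y)|f(y)|² dy < ∞ such that ∫_{ℝ^N} K(y)|f_{m_k}(y) − f(y)|² dy → 0 as k → ∞. -/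
open MeasureTheory Filter ENNReal

open Topology

/-- Jensen. -/
lemma jensen_sq {α V : Type*} [MeasurableSpace α] [NormedAddCommGroup V] [NormedSpace ℝ V]
    (ν : Measure α) [IsProbabilityMeasure ν] (F : α → V) :
    ‖∫ a, F a ∂ν‖ₑ ^ 2 ≤ ∫⁻ a, ‖F a‖ₑ ^ 2 ∂ν := by
  by_cases hF : AEStronglyMeasurable F ν
  · have h1 : ‖∫ a, F a ∂ν‖ₑ ≤ eLpNorm F 1 ν := by
      rw [eLpNorm_one_eq_lintegral_enorm]; exact enorm_integral_le_lintegral_enorm _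
    have h2 : eLpNorm F 1 ν ≤ eLpNorm F 2 ν :=
      eLpNorm_le_eLpNorm_of_exponent_le (by norm_num) hF
    have h3 : eLpNorm F 2 ν ^ 2 = ∫⁻ a, ‖F a‖ₑ ^ 2 ∂ν := by
      have := eLpNorm_nnreal_pow_eq_lintegral (f := F) (μ := ν) (p := 2) (by norm_num)
      simpa using this
    rw [← h3]
    gcongr
    exact h1.trans h2
  · rw [integral_non_aestronglyMeasurable hF]; simp

/-- the Gaussian weight -/
noncomputable def gw {N : ℕ} (y : EuclideanSpace ℝ (Fin N)) : ℝ≥0∞ :=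
  ENNReal.ofReal (Real.exp (‖y‖ ^ 2 / 4))

lemma gw_measurable {N : ℕ} : Measurable (gw (N := N)) := by
  unfold gw; fun_prop

lemma one_le_gw {N : ℕ} (y : EuclideanSpace ℝ (Fin N)) : 1 ≤ gw y := by
  unfold gw
  rw [ENNReal.one_le_ofReal]
  exact Real.one_le_exp (by positivity)

lemma gw_mul_sq {N : ℕ} {V : Type*} [NormedAddCommGroup V] (y : EuclideanSpace ℝ (Fin N)) (v : V) :
    ENNReal.ofReal (Real.exp (‖y‖ ^ 2 / 4) * ‖v‖ ^ 2) = gw y * ‖v‖ₑ ^ 2 := by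
  rw [ENNReal.ofReal_mul (by positivity), ENNReal.ofReal_pow (by positivity), ofReal_norm]; rfl

lemma gw_mul_sq' {N : ℕ} (y : EuclideanSpace ℝ (Fin N)) (v : ℝ) :
    ENNReal.ofReal (Real.exp (‖y‖ ^ 2 / 4) * v ^ 2) = gw y * ‖v‖ₑ ^ 2 := by
  rw [← gw_mul_sq]; simp

lemma gw_shift {N : ℕ} (x h : EuclideanSpace ℝ (Fin N)) (hh : ‖x‖ * ‖h‖ ≤ 2) :
    gw x ≤ ENNReal.ofReal (Real.exp 1) * gw (x - h) := by
  unfold gw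
  rw [← ENNReal.ofReal_mul (by positivity), ← Real.exp_add]
  apply ENNReal.ofReal_le_ofReal
  apply Real.exp_le_exp.2
  have h1 := norm_sub_sq_real x h
  have h2 := real_inner_le_norm x h
  nlinarith [sq_nonneg ‖h‖]

lemma gw_young {N : ℕ} (ν : Measure (EuclideanSpace ℝ (Fin N))) [IsProbabilityMeasure ν]
    (F : EuclideanSpace ℝ (Fin N) → ℝ≥0∞) (hF : Measurable F) (R ε : ℝ) (hRε : R * ε ≤ 2)
    (hε : 0 ≤ ε)
    (hν : ∀ᵐ h ∂ν, ‖h‖ ≤ ε) :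
    ∫⁻ x in Metric.closedBall (0 : EuclideanSpace ℝ (Fin N)) R, gw x * ∫⁻ h, F (x - h) ∂ν
      ≤ ENNReal.ofReal (Real.exp 1) * ∫⁻ x, gw x * F x := by
  have hm := gw_measurable (N := N)
  calc _ = ∫⁻ x in Metric.closedBall (0 : EuclideanSpace ℝ (Fin N)) R, ∫⁻ h, gw x * F (x - h) ∂ν := by
        congr 1; ext x; rw [lintegral_const_mul]; fun_prop
    _ = ∫⁻ h, ∫⁻ x in Metric.closedBall (0 : EuclideanSpace ℝ (Fin N)) R, gw x * F (x - h) ∂volume ∂ν := by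
        rw [lintegral_lintegral_swap]
        fun_prop
    _ ≤ ∫⁻ h, ENNReal.ofReal (Real.exp 1) * ∫⁻ x, gw x * F x ∂volume ∂ν := by
        apply lintegral_mono_ae
        filter_upwards [hν] with h hh
        calc _ ≤ ∫⁻ x in Metric.closedBall (0 : EuclideanSpace ℝ (Fin N)) R,
                ENNReal.ofReal (Real.exp 1) * (gw (x - h) * F (x - h)) := by
              apply setLIntegral_mono (by fun_prop)
              intro x hx
              rw [← mul_assoc]
              gcongr
              apply gw_shift
              rw [mem_closedBall_zero_iff] at hx
              calc ‖x‖ * ‖h‖ ≤ R * ε := by gcongr; exact (norm_nonneg x).trans hx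
                _ ≤ 2 := hRε
          _ ≤ ∫⁻ x, ENNReal.ofReal (Real.exp 1) * (gw (x - h) * F (x - h)) :=
              setLIntegral_le_lintegral _ _
          _ = _ := by
              rw [lintegral_const_mul _ (by fun_prop)]
              congr 1
              exact lintegral_sub_right_eq_self (fun x => gw x * F x) h
    _ = _ := by simp

/-- translation estimate for C¹ functions -/
lemma trans_smooth {N : ℕ} (v : EuclideanSpace ℝ (Fin N) → ℝ) (hv : ContDiff ℝ 1 v)
    (h : EuclideanSpace ℝ (Fin N)) :
    ∫⁻ x, ‖v (x + h) - v x‖ₑ ^ 2 ≤ ‖h‖ₑ ^ 2 * ∫⁻ x, ‖fderiv ℝ v x‖ₑ ^ 2 := by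
  have hc : Continuous (fderiv ℝ v) := hv.continuous_fderiv (by norm_num)
  let ν : Measure ℝ := volume.restrict (Set.Ioc 0 1)
  haveI : IsProbabilityMeasure ν := ⟨by simp [ν]⟩
  have key : ∀ x, ‖v (x + h) - v x‖ₑ ^ 2 ≤ ∫⁻ t, ‖h‖ₑ ^ 2 * ‖fderiv ℝ v (x + t • h)‖ₑ ^ 2 ∂ν := by
    intro x
    have e : ∫ t in (0:ℝ)..1, fderiv ℝ v (x + t • h) h = v (x + h) - v x := by
      have := intervalIntegral.integral_eq_sub_of_hasDerivAt (a := (0:ℝ)) (b := 1)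
        (f := fun t : ℝ => v (x + t • h)) (f' := fun t => fderiv ℝ v (x + t • h) h) ?_ ?_
      · simpa using this
      · intro t _
        have h1 : HasDerivAt (fun t : ℝ => x + t • h) h t := by
          simpa using ((hasDerivAt_id t).smul_const h).const_add x
        exact ((hv.differentiable (by norm_num) _).hasFDerivAt).comp_hasDerivAt t h1
      · apply Continuous.intervalIntegrable
        fun_prop
    rw [← e, intervalIntegral.integral_of_le zero_le_one]
    refine (jensen_sq ν _).trans ?_
    gcongr with t
    rw [← mul_pow]
    gcongr
    rw [mul_comm]
    exact ContinuousLinearMap.le_opNorm_enorm _ _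
  calc _ ≤ ∫⁻ x, ∫⁻ t, ‖h‖ₑ ^ 2 * ‖fderiv ℝ v (x + t • h)‖ₑ ^ 2 ∂ν := lintegral_mono key
    _ = ∫⁻ t, ∫⁻ x, ‖h‖ₑ ^ 2 * ‖fderiv ℝ v (x + t • h)‖ₑ ^ 2 ∂volume ∂ν := by
        rw [lintegral_lintegral_swap]
        apply Measurable.aemeasurable
        apply Continuous.measurable
        apply ENNReal.continuous_const_mul (by simp) |>.comp
        fun_prop
    _ = ∫⁻ t, ‖h‖ₑ ^ 2 * ∫⁻ x, ‖fderiv ℝ v x‖ₑ ^ 2 ∂volume ∂ν := by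
        congr 1; ext t
        rw [lintegral_const_mul' _ _ (by simp)]
        congr 1
        exact lintegral_add_right_eq_self (fun x => ‖fderiv ℝ v x‖ₑ ^ 2) (t • h)
    _ = _ := by simp

lemma tail_smooth {N : ℕ} (v : EuclideanSpace ℝ (Fin N) → ℝ) (hv : ContDiff ℝ 1 v)
    (hs : HasCompactSupport v) :
    ∫⁻ x, gw x * (‖x‖ₑ ^ 2 * ‖v x‖ₑ ^ 2) ≤ 16 * ∫⁻ x, gw x * ‖fderiv ℝ v x‖ₑ ^ 2 := by
  have hc : Continuous (fderiv ℝ v) := hv.continuous_fderiv (by norm_num)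
  have hvc : Continuous v := hv.continuous
  have hs' : HasCompactSupport (fderiv ℝ v) := hs.fderiv ℝ
  let k : EuclideanSpace ℝ (Fin N) → ℝ := fun y => Real.exp (‖y‖ ^ 2 / 4)
  have hk : Continuous k := by fun_prop
  have hkd : ∀ y, HasFDerivAt k ((k y / 2) • innerSL ℝ y) y := by
    intro y
    have h1 : HasFDerivAt (fun y : EuclideanSpace ℝ (Fin N) => ‖y‖ ^ 2 / 4) ((1 / 2 : ℝ) • innerSL ℝ y) y := by
      have := (HasStrictFDerivAt.hasFDerivAt (hasStrictFDerivAt_norm_sq y)).const_mul (1 / 4 : ℝ)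
      convert! this using 1
      · ext; ring
      · ext z; simp; ring
    have := h1.exp
    convert! this using 1
    ext z; simp [k]; ring
  -- integrability
  have hI0 : Integrable (fun y => k y * (‖y‖ ^ 2 * v y ^ 2)) := by
    apply Continuous.integrable_of_hasCompactSupport (by fun_prop)
    refine hs.mono ?_
    intro y hy; contrapose! hy; simp at hy; simp [hy]
  have hI1 : Integrable (fun y => k y * v y ^ 2) := by
    apply Continuous.integrable_of_hasCompactSupport (by fun_prop)
    refine hs.mono ?_
    intro y hy; contrapose! hy; simp at hy; simp [hy]
  have hI2 : Integrable (fun y => k y * ‖fderiv ℝ v y‖ ^ 2) := by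
    apply Continuous.integrable_of_hasCompactSupport (by fun_prop)
    refine hs'.mono ?_
    intro y hy; contrapose! hy; simp at hy; simp [hy]
  have hvd : ∀ y, HasFDerivAt (fun y => v y ^ 2) ((2 * v y) • fderiv ℝ v y) y := by
    intro y
    have := ((hv.differentiable (by norm_num) y).hasFDerivAt).pow 2
    convert! this using 1
    ext; simp
  let e : Fin N → EuclideanSpace ℝ (Fin N) := fun i => EuclideanSpace.single i 1
  have hI3 : ∀ i, Integrable (fun y : EuclideanSpace ℝ (Fin N) => y i * k y * (2 * v y * fderiv ℝ v y (e i))) := by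
    intro i
    apply Continuous.integrable_of_hasCompactSupport (by fun_prop)
    refine hs.mono ?_
    intro y hy; contrapose! hy; simp at hy; simp [hy]
  have hI4 : ∀ i, Integrable (fun y : EuclideanSpace ℝ (Fin N) => (k y + y i * (k y / 2 * y i)) * v y ^ 2) := by
    intro i
    apply Continuous.integrable_of_hasCompactSupport (by fun_prop)
    refine hs.mono ?_
    intro y hy; contrapose! hy; simp at hy; simp [hy]
  have hI5 : ∀ i, Integrable (fun y : EuclideanSpace ℝ (Fin N) => (y i * k y) * v y ^ 2) := by
    intro i
    apply Continuous.integrable_of_hasCompactSupport (by fun_prop)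
    refine hs.mono ?_
    intro y hy; contrapose! hy; simp at hy; simp [hy]
  have ibp : ∀ i, ∫ y : EuclideanSpace ℝ (Fin N), y i * k y * (2 * v y * fderiv ℝ v y (e i))
      = - ∫ y : EuclideanSpace ℝ (Fin N), (k y + y i * (k y / 2 * y i)) * v y ^ 2 := by
    intro i
    refine integral_bilinear_hasLineDerivAt_right_eq_neg_left_of_integrable
      (B := ContinuousLinearMap.mul ℝ ℝ) (f := fun y : EuclideanSpace ℝ (Fin N) => y i * k y)
      (f' := fun y => k y + y i * (k y / 2 * y i)) (g := fun y => v y ^ 2)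
      (g' := fun y => 2 * v y * fderiv ℝ v y (e i)) (v := e i)
      (hI4 i) (hI3 i) (hI5 i) ?_ ?_
    · intro y _
      have h1 : HasFDerivAt (fun y : EuclideanSpace ℝ (Fin N) => y i)
          (EuclideanSpace.proj i : EuclideanSpace ℝ (Fin N) →L[ℝ] ℝ) y :=
        (EuclideanSpace.proj i : EuclideanSpace ℝ (Fin N) →L[ℝ] ℝ).hasFDerivAt
      have := (h1.mul (hkd y)).hasLineDerivAt (e i)
      convert! this using 1
      simp [e, EuclideanSpace.inner_single_right]
      ring
    · intro y _
      have := (hvd y).hasLineDerivAt (e i)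
      convert! this using 1
  have sum1 : ∑ i, ∫ y : EuclideanSpace ℝ (Fin N), y i * k y * (2 * v y * fderiv ℝ v y (e i))
      = ∫ y, k y * (2 * v y * fderiv ℝ v y y) := by
    rw [← integral_finsetSum _ (fun i _ => hI3 i)]
    congr 1; ext y
    have hy : y = ∑ i, y i • e i := by
      ext j
      simp [e, Finset.sum_apply, Pi.single_apply]
    conv_rhs => rw [hy]
    rw [map_sum, Finset.mul_sum, Finset.mul_sum]
    rw [← hy]
    apply Finset.sum_congr rfl
    intro i _
    simp; ring
  have sum2 : ∑ i, ∫ y : EuclideanSpace ℝ (Fin N), (k y + y i * (k y / 2 * y i)) * v y ^ 2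
      = ∫ y, (N * (k y * v y ^ 2) + (1 / 2) * (k y * (‖y‖ ^ 2 * v y ^ 2))) := by
    rw [← integral_finsetSum _ (fun i _ => hI4 i)]
    congr 1; ext y
    rw [EuclideanSpace.norm_sq_eq, ← Finset.sum_mul, Finset.sum_add_distrib]
    simp only [Finset.sum_const, Finset.card_univ, Fintype.card_fin, nsmul_eq_mul, Real.norm_eq_abs, sq_abs]
    have : ∑ i, y i * (k y / 2 * y i) = k y / 2 * ∑ i, y i ^ 2 := by
      rw [Finset.mul_sum]; apply Finset.sum_congr rfl; intros; ring
    rw [this]; ring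
  have main : ∫ y, (N * (k y * v y ^ 2) + (1 / 2) * (k y * (‖y‖ ^ 2 * v y ^ 2)))
      = - ∫ y, k y * (2 * v y * fderiv ℝ v y y) := by
    rw [← sum1, ← sum2, ← Finset.sum_neg_distrib]
    apply Finset.sum_congr rfl; intro i _; rw [ibp i, neg_neg]
  have hI6 : Integrable (fun y => k y * (2 * v y * fderiv ℝ v y y)) := by
    apply Continuous.integrable_of_hasCompactSupport (by fun_prop)
    refine hs.mono ?_
    intro y hy; contrapose! hy; simp at hy; simp [hy]
  have fin : ∫ y, k y * (‖y‖ ^ 2 * v y ^ 2) ≤ 16 * ∫ y, k y * ‖fderiv ℝ v y‖ ^ 2 := by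
    rw [integral_add (hI1.const_mul _) (hI0.const_mul _), integral_const_mul, integral_const_mul] at main
    have h0 : 0 ≤ ∫ y, k y * v y ^ 2 := integral_nonneg (fun y => by positivity)
    have h1 : - ∫ y, k y * (2 * v y * fderiv ℝ v y y) ≤
        ∫ y, ((1 / 4) * (k y * (‖y‖ ^ 2 * v y ^ 2)) + 4 * (k y * ‖fderiv ℝ v y‖ ^ 2)) := by
      rw [← integral_neg]
      apply integral_mono hI6.neg ((hI0.const_mul _).add (hI2.const_mul _))
      intro y
      have hop : |fderiv ℝ v y y| ≤ ‖fderiv ℝ v y‖ * ‖y‖ := (fderiv ℝ v y).le_opNorm y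
      have hkp : 0 < k y := Real.exp_pos _
      have : -(2 * v y * fderiv ℝ v y y) ≤ (1/4) * (‖y‖ ^ 2 * v y ^ 2) + 4 * ‖fderiv ℝ v y‖ ^ 2 := by
        have a1 : -(2 * v y * fderiv ℝ v y y) ≤ 2 * |v y| * (‖fderiv ℝ v y‖ * ‖y‖) := by
          calc _ ≤ |2 * v y * fderiv ℝ v y y| := neg_le_abs _
            _ = 2 * |v y| * |fderiv ℝ v y y| := by simp [abs_mul]
            _ ≤ _ := by gcongr
        have a2 := sq_nonneg ((1/2) * (‖y‖ * |v y|) - 2 * ‖fderiv ℝ v y‖)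
        have a3 : |v y| ^ 2 = v y ^ 2 := sq_abs _
        nlinarith
      have := mul_le_mul_of_nonneg_left this hkp.le
      simp only [Pi.neg_apply, Pi.add_apply]
      linarith
    rw [integral_add (hI0.const_mul _) (hI2.const_mul _), integral_const_mul, integral_const_mul] at h1
    have : (0:ℝ) ≤ N := by positivity
    nlinarith [mul_nonneg this h0]
  have c1 : ∫⁻ x, gw x * (‖x‖ₑ ^ 2 * ‖v x‖ₑ ^ 2) = ENNReal.ofReal (∫ y, k y * (‖y‖ ^ 2 * v y ^ 2)) := by
    rw [ofReal_integral_eq_lintegral_ofReal hI0 (ae_of_all _ fun y => by positivity)]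
    congr 1; ext y
    have := gw_mul_sq y (‖y‖ • v y)
    simp only [norm_smul, Real.norm_eq_abs, enorm_smul, enorm_norm, mul_pow, sq_abs] at this
    exact this.symm
  have c2 : ∫⁻ x, gw x * ‖fderiv ℝ v x‖ₑ ^ 2 = ENNReal.ofReal (∫ y, k y * ‖fderiv ℝ v y‖ ^ 2) := by
    rw [ofReal_integral_eq_lintegral_ofReal hI2 (ae_of_all _ fun y => by positivity)]
    congr 1; ext y
    exact (gw_mul_sq y _).symm
  rw [c1, c2]
  have : (16 : ℝ≥0∞) = ENNReal.ofReal 16 := by simp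
  rw [this, ← ENNReal.ofReal_mul (by norm_num)]
  exact ENNReal.ofReal_le_ofReal fin

/-- regularised data -/
structure GoodPair {N : ℕ} (f : EuclideanSpace ℝ (Fin N) → ℝ)
    (g : EuclideanSpace ℝ (Fin N) → EuclideanSpace ℝ (Fin N)) : Prop where
  mf : Measurable f
  mg : Measurable g
  lf : LocallyIntegrable f volume
  lg : LocallyIntegrable g volume
  weak : ∀ φ : EuclideanSpace ℝ (Fin N) → ℝ, ContDiff ℝ (⊤ : ℕ∞) φ → HasCompactSupport φ →
    ∀ i : Fin N,
      ∫ y, f y * fderiv ℝ φ y (EuclideanSpace.single i 1) = -∫ y, g y i * φ y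

open scoped Convolution in
lemma mollify {N : ℕ} {f : EuclideanSpace ℝ (Fin N) → ℝ}
    {g : EuclideanSpace ℝ (Fin N) → EuclideanSpace ℝ (Fin N)} (H : GoodPair f g)
    (b : ContDiffBump (0 : EuclideanSpace ℝ (Fin N))) :
    ∃ ν : Measure (EuclideanSpace ℝ (Fin N)), IsProbabilityMeasure ν ∧ (∀ᵐ h ∂ν, ‖h‖ ≤ b.rOut) ∧
      ContDiff ℝ 1 (b.normed volume ⋆[ContinuousLinearMap.lsmul ℝ ℝ, volume] f) ∧
      (∀ x, (b.normed volume ⋆[ContinuousLinearMap.lsmul ℝ ℝ, volume] f) x = ∫ h, f (x - h) ∂ν) ∧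
      (∀ x, fderiv ℝ (b.normed volume ⋆[ContinuousLinearMap.lsmul ℝ ℝ, volume] f) x
        = innerSL ℝ (∫ h, g (x - h) ∂ν)) := by
  set ρ := b.normed (volume : Measure (EuclideanSpace ℝ (Fin N))) with hρ
  have hρc : Continuous ρ := b.continuous_normed
  have hρd : ContDiff ℝ (⊤ : ℕ∞) ρ := b.contDiff_normed
  have hρ1 : ContDiff ℝ 1 ρ := by exact_mod_cast b.contDiff_normed (n := 1)
  have hρ0 : ∀ x, 0 ≤ ρ x := b.nonneg_normed
  have hρs : HasCompactSupport ρ := b.hasCompactSupport_normed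
  let ν : Measure (EuclideanSpace ℝ (Fin N)) := volume.withDensity (fun x => ENNReal.ofReal (ρ x))
  have hνi : ∀ {V : Type} [NormedAddCommGroup V] [NormedSpace ℝ V]
      (F : EuclideanSpace ℝ (Fin N) → V), ∫ h, F h ∂ν = ∫ h, ρ h • F h := by
    intro V _ _ F
    rw [integral_withDensity_eq_integral_toReal_smul (by fun_prop) (by simp)]
    congr 1; ext h; rw [ENNReal.toReal_ofReal (hρ0 h)]
  refine ⟨ν, ?_, ?_, ?_, ?_, ?_⟩
  · constructor
    rw [withDensity_apply _ MeasurableSet.univ, Measure.restrict_univ,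
      ← ofReal_integral_eq_lintegral_ofReal b.integrable_normed (ae_of_all _ hρ0), b.integral_normed]
    simp
  · rw [ae_withDensity_iff (by fun_prop)]
    apply ae_of_all
    intro x hx
    have : x ∈ Function.support ρ := by
      intro h0; simp [h0] at hx
    rw [b.support_normed_eq] at this
    exact (mem_ball_zero_iff.1 this).le
  · exact_mod_cast hρs.contDiff_convolution_left (n := 1) _ hρ1 H.lf
  · intro x
    rw [hνi]; rfl
  · intro x
    rw [(hρs.hasFDerivAt_convolution_left (ContinuousLinearMap.lsmul ℝ ℝ) hρ1 H.lf x).fderiv]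
    have hex : Integrable (fun t => ((ContinuousLinearMap.lsmul ℝ ℝ).precompL (EuclideanSpace ℝ (Fin N)))
        (fderiv ℝ ρ t) (f (x - t))) :=
      (hρs.fderiv ℝ).convolutionExists_left _ (hρ1.continuous_fderiv (by norm_num)) H.lf x
    have hgi : Integrable (fun t => ρ t • g (x - t)) :=
      hρs.convolutionExists_left (ContinuousLinearMap.lsmul ℝ ℝ) hρc H.lg x
    refine ContinuousLinearMap.coe_injective ?_
    refine (EuclideanSpace.basisFun (Fin N) ℝ).toBasis.ext ?_
    intro i
    have e1 : (fderiv ℝ ρ ⋆[(ContinuousLinearMap.lsmul ℝ ℝ).precompL (EuclideanSpace ℝ (Fin N)), volume] f) x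
        (EuclideanSpace.single i 1) = ∫ t, f (x - t) * fderiv ℝ ρ t (EuclideanSpace.single i 1) := by
      rw [convolution_def, ContinuousLinearMap.integral_apply hex]
      congr 1; ext t; simp [mul_comm]
    have hψd : ∀ t, HasFDerivAt (fun t => ρ (x - t)) (-(fderiv ℝ ρ (x - t))) t := by
      intro t
      have h1 : HasFDerivAt ρ (fderiv ℝ ρ (x - t)) (x - t) :=
        (hρ1.differentiable (by norm_num) _).hasFDerivAt
      have h2 : HasFDerivAt (fun t : EuclideanSpace ℝ (Fin N) => x - t) (-(ContinuousLinearMap.id ℝ _)) t :=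
        (hasFDerivAt_id t).const_sub x
      have := h1.comp t h2
      convert! this using 1
      ext; simp
    have hw := H.weak (fun t => ρ (x - t)) (by fun_prop) (hρs.comp_homeomorph (Homeomorph.subLeft x)) i
    have e2 : ∫ t, f (x - t) * fderiv ℝ ρ t (EuclideanSpace.single i 1) =
        ∫ t, g t i * ρ (x - t) := by
      rw [← neg_eq_iff_eq_neg] at hw
      rw [← hw, ← integral_neg, ← integral_sub_left_eq_self _ volume x]
      congr 1; ext t
      rw [(hψd t).fderiv]; simp
    have e3 : (∫ h, g (x - h) ∂ν) i = ∫ t, g t i * ρ (x - t) := by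
      rw [hνi, ← integral_sub_left_eq_self (fun t => g t i * ρ (x - t)) volume x]
      have : ∫ t, (ρ t • g (x - t)) i = (∫ t, ρ t • g (x - t)) i :=
        (EuclideanSpace.proj i : EuclideanSpace ℝ (Fin N) →L[ℝ] ℝ).integral_comp_comm hgi
      rw [← this]
      congr 1; ext t; simp [mul_comm]
    simp only [OrthonormalBasis.coe_toBasis, EuclideanSpace.basisFun_apply, ContinuousLinearMap.coe_coe]
    rw [e1, e2, ← e3]
    simp [EuclideanSpace.inner_single_right]

lemma enorm_add_sq_le {V : Type*} [NormedAddCommGroup V] (a b : V) :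
    ‖a + b‖ₑ ^ 2 ≤ 2 * (‖a‖ₑ ^ 2 + ‖b‖ₑ ^ 2) := by
  calc ‖a + b‖ₑ ^ 2 ≤ (‖a‖ₑ + ‖b‖ₑ) ^ 2 := by gcongr; exact enorm_add_le _ _
    _ ≤ 2 * (‖a‖ₑ ^ 2 + ‖b‖ₑ ^ 2) := by
      have := add_sq_le (a := ‖a‖₊) (b := ‖b‖₊)
      simp only [enorm_eq_nnnorm]
      exact_mod_cast this

open scoped Convolution in
lemma approx (N : ℕ) : ∃ c : ℝ≥0∞, c < ⊤ ∧ ∀ (f : EuclideanSpace ℝ (Fin N) → ℝ)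
    (g : EuclideanSpace ℝ (Fin N) → EuclideanSpace ℝ (Fin N)), GoodPair f g →
    ∃ v : ℕ → EuclideanSpace ℝ (Fin N) → ℝ, (∀ n, ContDiff ℝ 1 (v n)) ∧
      (∀ n, HasCompactSupport (v n)) ∧
      (∀ n, ∫⁻ x, gw x * ‖fderiv ℝ (v n) x‖ₑ ^ 2 ≤
        c * ((∫⁻ x, gw x * ‖f x‖ₑ ^ 2) + ∫⁻ x, gw x * ‖g x‖ₑ ^ 2)) ∧
      ∀ᵐ x, Tendsto (fun n => v n x) atTop (𝓝 (f x)) := by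
  let χ : ContDiffBump (0 : EuclideanSpace ℝ (Fin N)) := ⟨1, 2, by norm_num, by norm_num⟩
  have hχ1 : ContDiff ℝ 1 χ := χ.contDiff
  have hχc : Continuous (fderiv ℝ χ) := hχ1.continuous_fderiv (by norm_num)
  obtain ⟨B, hB⟩ := (χ.hasCompactSupport.fderiv ℝ).exists_bound_of_continuous hχc
  have hB0 : 0 ≤ B := (norm_nonneg _).trans (hB 0)
  let B' : ℝ≥0∞ := ENNReal.ofReal B
  refine ⟨2 * (1 + B' ^ 2) * ENNReal.ofReal (Real.exp 1), ?_, ?_⟩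
  · finiteness
  intro f g H
  let b : ℕ → ContDiffBump (0 : EuclideanSpace ℝ (Fin N)) := fun n =>
    ⟨1 / (2 * (n + 1)), 1 / (n + 1), by positivity, by
      apply one_div_lt_one_div_of_lt <;> nlinarith [(Nat.cast_nonneg n : (0:ℝ) ≤ n)]⟩
  let u : ℕ → EuclideanSpace ℝ (Fin N) → ℝ := fun n =>
    (b n).normed volume ⋆[ContinuousLinearMap.lsmul ℝ ℝ, volume] f
  have hu := fun n => mollify H (b n)
  choose ν hνp hνs hud huf hug using hu
  have hud : ∀ n, ContDiff ℝ 1 (u n) := hud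
  have huf : ∀ n x, u n x = ∫ h, f (x - h) ∂(ν n) := huf
  have hug : ∀ n x, fderiv ℝ (u n) x = innerSL ℝ (∫ h, g (x - h) ∂(ν n)) := hug
  let X : ℕ → EuclideanSpace ℝ (Fin N) → ℝ := fun n x => χ ((1 / ((n : ℝ) + 1)) • x)
  have hX : ∀ n, ContDiff ℝ 1 (X n) := fun n => hχ1.comp (contDiff_const_smul _)
  have hX1 : ∀ n x, ‖X n x‖ ≤ 1 := by
    intro n x
    rw [Real.norm_of_nonneg χ.nonneg]; exact χ.le_one
  have hXd : ∀ n x, ‖fderiv ℝ (X n) x‖ ≤ B := by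
    intro n x
    have : fderiv ℝ (X n) x = (1 / ((n : ℝ) + 1)) • fderiv ℝ χ ((1 / ((n : ℝ) + 1)) • x) :=
      fderiv_comp_smul _
    rw [this, norm_smul]
    have h1 : ‖(1 / ((n : ℝ) + 1))‖ ≤ 1 := by
      rw [Real.norm_of_nonneg (by positivity)]
      rw [div_le_one (by positivity)]
      linarith [(Nat.cast_nonneg n : (0:ℝ) ≤ n)]
    calc _ ≤ 1 * B := by gcongr; exact hB _
      _ = B := one_mul _
  have hX0 : ∀ (n : ℕ) (x : EuclideanSpace ℝ (Fin N)), x ∉ Metric.closedBall (0 : EuclideanSpace ℝ (Fin N)) (2 * (n + 1)) → X n x = 0 := by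
    intro n x hx
    apply χ.zero_of_le_dist
    rw [mem_closedBall_zero_iff, not_le] at hx
    rw [dist_zero_right, norm_smul, Real.norm_of_nonneg (by positivity)]
    change 2 ≤ _
    rw [one_div, le_inv_mul_iff₀ (by positivity)]
    linarith
  have hXs : ∀ n, HasCompactSupport (X n) := fun n =>
    HasCompactSupport.intro (isCompact_closedBall 0 (2 * (n + 1))) (hX0 n)
  have hts : ∀ n, tsupport (X n) ⊆ Metric.closedBall 0 (2 * (n + 1)) := fun n =>
    closure_minimal (fun x hx => by by_contra h; exact hx (hX0 n x h)) Metric.isClosed_closedBall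
  refine ⟨fun n x => X n x * u n x, fun n => (hX n).mul (hud n), fun n => (hXs n).mul_right, ?_, ?_⟩
  · intro n
    have hm := gw_measurable (N := N)
    have := hνp n
    have hmf := H.mf
    have hmg := H.mg
    have hpt : ∀ x, ‖fderiv ℝ (fun x => X n x * u n x) x‖ₑ ^ 2 ≤
        (Metric.closedBall (0 : EuclideanSpace ℝ (Fin N)) (2 * (n + 1))).indicator (fun x =>
        2 * (∫⁻ h, ‖g (x - h)‖ₑ ^ 2 ∂(ν n)) + 2 * B' ^ 2 * (∫⁻ h, ‖f (x - h)‖ₑ ^ 2 ∂(ν n))) x := by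
      intro x
      by_cases hx : x ∈ Metric.closedBall (0 : EuclideanSpace ℝ (Fin N)) (2 * (n + 1))
      · rw [Set.indicator_of_mem hx]
        have hd := (((hX n).differentiable (by norm_num) x).hasFDerivAt.mul
          ((hud n).differentiable (by norm_num) x).hasFDerivAt).fderiv
        have hd : fderiv ℝ (fun x => X n x * u n x) x = X n x • fderiv ℝ (u n) x + u n x • fderiv ℝ (X n) x := hd
        rw [hd]
        refine (enorm_add_sq_le _ _).trans ?_
        rw [mul_add, mul_assoc 2]
        have hg1 : ‖fderiv ℝ (u n) x‖ₑ ^ 2 ≤ ∫⁻ h, ‖g (x - h)‖ₑ ^ 2 ∂(ν n) := by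
          rw [hug]
          have : ‖innerSL ℝ (∫ h, g (x - h) ∂(ν n))‖ₑ = ‖∫ h, g (x - h) ∂(ν n)‖ₑ := by
            rw [← ofReal_norm, ← ofReal_norm, innerSL_apply_norm]
          rw [this]
          exact jensen_sq _ _
        have hf1 : ‖u n x‖ₑ ^ 2 ≤ ∫⁻ h, ‖f (x - h)‖ₑ ^ 2 ∂(ν n) := by
          rw [huf]
          exact jensen_sq _ _
        have hXe : ‖X n x‖ₑ ≤ 1 := by
          rw [← ofReal_norm]; exact ENNReal.ofReal_le_one.2 (hX1 n x)
        have hXde : ‖fderiv ℝ (X n) x‖ₑ ≤ B' := by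
          rw [← ofReal_norm]; exact ENNReal.ofReal_le_ofReal (hXd n x)
        rw [enorm_smul, enorm_smul, mul_pow, mul_pow]
        refine add_le_add (mul_le_mul_right ?_ _) (mul_le_mul_right ?_ _)
        · calc _ ≤ 1 ^ 2 * ∫⁻ h, ‖g (x - h)‖ₑ ^ 2 ∂(ν n) := by gcongr
            _ = _ := by simp
        · rw [mul_comm]; gcongr
      · rw [Set.indicator_of_notMem hx]
        have : fderiv ℝ (fun x => X n x * u n x) x = 0 := by
          apply image_eq_zero_of_notMem_tsupport
          intro h
          apply hx
          apply hts n
          exact tsupport_mul_subset_left (tsupport_fderiv_subset ℝ h)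
        have h0 : ‖fderiv ℝ (fun x => X n x * u n x) x‖ₑ = 0 := by
          rw [← ofReal_norm, this, norm_zero, ENNReal.ofReal_zero]
        rw [h0]; simp
    have hRε : 2 * ((n : ℝ) + 1) * (b n).rOut ≤ 2 := by
      change 2 * ((n : ℝ) + 1) * (1 / (n + 1)) ≤ 2
      field_simp; rfl
    have y1 := gw_young (ν n) (fun x => ‖g x‖ₑ ^ 2) (by fun_prop) (2 * (n + 1)) (b n).rOut hRε
      (b n).rOut_pos.le (hνs n)
    have y2 := gw_young (ν n) (fun x => ‖f x‖ₑ ^ 2) (by fun_prop) (2 * (n + 1)) (b n).rOut hRε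
      (b n).rOut_pos.le (hνs n)
    have mG : Measurable (fun x => ∫⁻ h, ‖g (x - h)‖ₑ ^ 2 ∂(ν n)) := by
      apply Measurable.lintegral_prod_right'
        (f := fun p : EuclideanSpace ℝ (Fin N) × EuclideanSpace ℝ (Fin N) => ‖g (p.1 - p.2)‖ₑ ^ 2)
      fun_prop
    have mF : Measurable (fun x => ∫⁻ h, ‖f (x - h)‖ₑ ^ 2 ∂(ν n)) := by
      apply Measurable.lintegral_prod_right'
        (f := fun p : EuclideanSpace ℝ (Fin N) × EuclideanSpace ℝ (Fin N) => ‖f (p.1 - p.2)‖ₑ ^ 2)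
      fun_prop
    calc _ ≤ ∫⁻ x, (Metric.closedBall (0 : EuclideanSpace ℝ (Fin N)) (2 * (n + 1))).indicator (fun x =>
        2 * (gw x * ∫⁻ h, ‖g (x - h)‖ₑ ^ 2 ∂(ν n)) +
          2 * B' ^ 2 * (gw x * ∫⁻ h, ‖f (x - h)‖ₑ ^ 2 ∂(ν n))) x := by
          apply lintegral_mono
          intro x
          refine (mul_le_mul_right (hpt x) (gw x)).trans ?_
          by_cases hx : x ∈ Metric.closedBall (0 : EuclideanSpace ℝ (Fin N)) (2 * (n + 1))
          · simp only [Set.indicator_of_mem hx]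
            apply le_of_eq; ring
          · simp [Set.indicator_of_notMem hx]
      _ = 2 * (∫⁻ x in Metric.closedBall (0 : EuclideanSpace ℝ (Fin N)) (2 * (n + 1)), gw x * ∫⁻ h, ‖g (x - h)‖ₑ ^ 2 ∂(ν n)) +
          2 * B' ^ 2 * (∫⁻ x in Metric.closedBall (0 : EuclideanSpace ℝ (Fin N)) (2 * (n + 1)), gw x * ∫⁻ h, ‖f (x - h)‖ₑ ^ 2 ∂(ν n)) := by
          rw [lintegral_indicator measurableSet_closedBall, lintegral_add_left (by fun_prop),
            lintegral_const_mul _ (by fun_prop), lintegral_const_mul _ (by fun_prop)]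
      _ ≤ 2 * (ENNReal.ofReal (Real.exp 1) * ∫⁻ x, gw x * ‖g x‖ₑ ^ 2) +
          2 * B' ^ 2 * (ENNReal.ofReal (Real.exp 1) * ∫⁻ x, gw x * ‖f x‖ₑ ^ 2) := by gcongr
      _ ≤ 2 * (1 + B' ^ 2) * (ENNReal.ofReal (Real.exp 1) * ∫⁻ x, gw x * ‖g x‖ₑ ^ 2) +
          2 * (1 + B' ^ 2) * (ENNReal.ofReal (Real.exp 1) * ∫⁻ x, gw x * ‖f x‖ₑ ^ 2) := by
          gcongr
          · nth_rewrite 1 [← mul_one 2]; gcongr; exact le_self_add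
          · exact le_add_self
      _ = _ := by ring
  · have := ContDiffBump.ae_convolution_tendsto_right_of_locallyIntegrable (μ := volume) (φ := b)
      (l := atTop) (K := 2) ?_ ?_ H.lf
    · filter_upwards [this] with x hx
      have hev : ∀ᶠ n : ℕ in atTop, X n x = 1 := by
        obtain ⟨n0, hn0⟩ := exists_nat_ge ‖x‖
        filter_upwards [eventually_ge_atTop n0] with n hn
        apply χ.one_of_mem_closedBall
        rw [mem_closedBall_zero_iff, norm_smul, Real.norm_of_nonneg (by positivity)]
        change _ ≤ (1:ℝ)
        rw [one_div, inv_mul_le_iff₀ (by positivity)]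
        have : (n0 : ℝ) ≤ n := by exact_mod_cast hn
        linarith
      refine hx.congr' ?_
      filter_upwards [hev] with n hn
      rw [hn, one_mul]
    · exact tendsto_one_div_add_atTop_nhds_zero_nat
    · apply Eventually.of_forall
      intro n
      change 1 / ((n:ℝ) + 1) ≤ 2 * (1 / (2 * (n + 1)))
      apply le_of_eq; field_simp

lemma fatou_bound {α : Type*} [MeasurableSpace α] {μ : Measure α} {F : ℕ → α → ℝ≥0∞} {G : α → ℝ≥0∞}
    (hF : ∀ n, Measurable (F n)) (M : ℝ≥0∞) (hM : ∀ n, ∫⁻ x, F n x ∂μ ≤ M)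
    (ht : ∀ᵐ x ∂μ, Tendsto (fun n => F n x) atTop (𝓝 (G x))) : ∫⁻ x, G x ∂μ ≤ M := by
  calc ∫⁻ x, G x ∂μ = ∫⁻ x, liminf (fun n => F n x) atTop ∂μ := by
        apply lintegral_congr_ae
        filter_upwards [ht] with x hx using hx.liminf_eq.symm
    _ ≤ liminf (fun n => ∫⁻ x, F n x ∂μ) atTop := lintegral_liminf_le hF
    _ ≤ liminf (fun _ : ℕ => M) atTop := liminf_le_liminf (Eventually.of_forall hM)
    _ = M := by simp

lemma good_estimates (N : ℕ) : ∃ c : ℝ≥0∞, c < ⊤ ∧ ∀ (f : EuclideanSpace ℝ (Fin N) → ℝ)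
    (g : EuclideanSpace ℝ (Fin N) → EuclideanSpace ℝ (Fin N)), GoodPair f g →
    (∫⁻ x, gw x * (‖x‖ₑ ^ 2 * ‖f x‖ₑ ^ 2) ≤
      c * ((∫⁻ x, gw x * ‖f x‖ₑ ^ 2) + ∫⁻ x, gw x * ‖g x‖ₑ ^ 2)) ∧
    ∀ h, ∫⁻ x, ‖f (x + h) - f x‖ₑ ^ 2 ≤
      ‖h‖ₑ ^ 2 * (c * ((∫⁻ x, gw x * ‖f x‖ₑ ^ 2) + ∫⁻ x, gw x * ‖g x‖ₑ ^ 2)) := by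
  obtain ⟨c, hc, H⟩ := approx N
  refine ⟨16 * c, by finiteness, fun f g hfg => ?_⟩
  obtain ⟨v, hv1, hvs, hvb, hvt⟩ := H f g hfg
  set M := (∫⁻ x, gw x * ‖f x‖ₑ ^ 2) + ∫⁻ x, gw x * ‖g x‖ₑ ^ 2
  have hm := gw_measurable (N := N)
  have hvm : ∀ n, Measurable (v n) := fun n => (hv1 n).continuous.measurable
  constructor
  · apply fatou_bound (F := fun n x => gw x * (‖x‖ₑ ^ 2 * ‖v n x‖ₑ ^ 2))
    · intro n
      have := hvm n
      fun_prop
    · intro n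
      refine (tail_smooth (v n) (hv1 n) (hvs n)).trans ?_
      rw [mul_assoc]
      gcongr
      exact hvb n
    · filter_upwards [hvt] with x hx
      apply ENNReal.Tendsto.const_mul _ (Or.inr (by simp [gw]))
      apply ENNReal.Tendsto.const_mul _ (Or.inr (by simp))
      exact (ENNReal.continuous_pow 2).tendsto _ |>.comp (hx.enorm)
  · intro h
    apply fatou_bound (F := fun n x => ‖v n (x + h) - v n x‖ₑ ^ 2)
    · intro n
      have := hvm n
      fun_prop
    · intro n
      refine (trans_smooth (v n) (hv1 n) h).trans ?_
      gcongr
      calc _ ≤ ∫⁻ x, gw x * ‖fderiv ℝ (v n) x‖ₑ ^ 2 := by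
            apply lintegral_mono; intro x
            exact le_mul_of_one_le_left (by simp) (one_le_gw x)
        _ ≤ c * M := hvb n
        _ ≤ 16 * c * M := by
            gcongr
            exact le_mul_of_one_le_left (by simp) (by norm_num)
    · have h2 : ∀ᵐ x, Tendsto (fun n => v n (x + h)) atTop (𝓝 (f (x + h))) :=
        (measurePreserving_add_right volume h).quasiMeasurePreserving.ae hvt
      filter_upwards [hvt, h2] with x hx hx2
      exact (ENNReal.continuous_pow 2).tendsto _ |>.comp ((hx2.sub hx).enorm)

/-- Reduction to measurable representatives; also handles non-measurable `g`. -/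
lemma regularize {N : ℕ} {f : EuclideanSpace ℝ (Fin N) → ℝ}
    {g : EuclideanSpace ℝ (Fin N) → EuclideanSpace ℝ (Fin N)} (H : HasWeakGradient f g) :
    ∃ f' g', GoodPair f' g' ∧ f =ᵐ[volume] f' ∧
      ∫⁻ x, gw x * ‖g' x‖ₑ ^ 2 ≤ ∫⁻ x, gw x * ‖g x‖ₑ ^ 2 := by
  classical
  obtain ⟨hf, hw⟩ := H
  let P : Fin N → Prop := fun i => ∀ φ : EuclideanSpace ℝ (Fin N) → ℝ, ContDiff ℝ (⊤ : ℕ∞) φ →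
    HasCompactSupport φ → Integrable (fun y => g y i * φ y)
  let G : Fin N → EuclideanSpace ℝ (Fin N) → ℝ := fun i y => if P i then g y i else 0
  have hbad : ∀ i, ¬ P i → ∀ φ : EuclideanSpace ℝ (Fin N) → ℝ, ContDiff ℝ (⊤ : ℕ∞) φ →
    HasCompactSupport φ → ∫ y, f y * fderiv ℝ φ y (EuclideanSpace.single i 1) = 0 := by
    intro i hi φ hφ hφs
    simp only [P, not_forall] at hi
    obtain ⟨ψ, hψ, hψs, hni⟩ := hi
    have h0 : ∫ y, f y * fderiv ℝ ψ y (EuclideanSpace.single i 1) = 0 := by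
      rw [hw ψ hψ hψs i, integral_undef hni, neg_zero]
    by_cases hφi : Integrable (fun y => g y i * φ y)
    · have hni2 : ¬ Integrable (fun y => g y i * (φ + ψ) y) := by
        intro hc
        apply hni
        refine (hc.sub hφi).congr (ae_of_all _ fun y => ?_)
        simp; ring
      have h1 := hw (φ + ψ) (hφ.add hψ) (hφs.add hψs) i
      rw [integral_undef hni2, neg_zero] at h1
      have hint : ∀ θ : EuclideanSpace ℝ (Fin N) → ℝ, ContDiff ℝ (⊤ : ℕ∞) θ → HasCompactSupport θ →
          Integrable (fun y => f y * fderiv ℝ θ y (EuclideanSpace.single i 1)) := by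
        intro θ hθ hθs
        have hc : Continuous (fun y => fderiv ℝ θ y (EuclideanSpace.single i 1)) :=
          (hθ.continuous_fderiv (by simp)).clm_apply continuous_const
        have hs : HasCompactSupport (fun y => fderiv ℝ θ y (EuclideanSpace.single i 1)) :=
          hθs.fderiv_apply ℝ _
        have := hf.integrable_smul_left_of_hasCompactSupport hc hs
        simpa [mul_comm] using this
      have h2 : ∫ y, f y * fderiv ℝ (φ + ψ) y (EuclideanSpace.single i 1) =
          (∫ y, f y * fderiv ℝ φ y (EuclideanSpace.single i 1)) +
          ∫ y, f y * fderiv ℝ ψ y (EuclideanSpace.single i 1) := by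
        rw [← integral_add (hint φ hφ hφs) (hint ψ hψ hψs)]
        congr 1; ext y
        rw [fderiv_add (hφ.differentiable (by simp) y) (hψ.differentiable (by simp) y)]
        simp; ring
      rw [h0, add_zero] at h2
      rw [← h2, h1]
    · rw [hw φ hφ hφs i, integral_undef hφi, neg_zero]
  have hGl : ∀ i, LocallyIntegrable (G i) volume := by
    intro i
    by_cases hi : P i
    · rw [locallyIntegrable_iff]
      intro k hk
      obtain ⟨r, hr⟩ := hk.isBounded.subset_closedBall 0
      let b : ContDiffBump (0 : EuclideanSpace ℝ (Fin N)) :=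
        ⟨|r| + 1, |r| + 2, by positivity, by linarith⟩
      have := (hi b b.contDiff b.hasCompactSupport).integrableOn (s := k)
      refine this.congr_fun ?_ hk.measurableSet
      intro y hy
      have hb : b y = 1 := by
        apply b.one_of_mem_closedBall
        refine Metric.closedBall_subset_closedBall ?_ (hr hy)
        exact (le_abs_self r).trans (by simp [b])
      simp [G, hi, hb]
    · have : G i = fun _ => 0 := by ext y; simp [G, hi]
      rw [this]; exact locallyIntegrable_zero
  have hGw : ∀ φ : EuclideanSpace ℝ (Fin N) → ℝ, ContDiff ℝ (⊤ : ℕ∞) φ → HasCompactSupport φ →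
    ∀ i : Fin N, ∫ y, f y * fderiv ℝ φ y (EuclideanSpace.single i 1) = -∫ y, G i y * φ y := by
    intro φ hφ hφs i
    by_cases hi : P i
    · simp only [G, hi, if_true]; exact hw φ hφ hφs i
    · simp only [G, hi, if_false]; rw [hbad i hi φ hφ hφs]; simp
  let g1 : EuclideanSpace ℝ (Fin N) → EuclideanSpace ℝ (Fin N) := fun y => WithLp.toLp 2 (fun i => G i y)
  have hg1 : g1 = fun y => ∑ i, G i y • (EuclideanSpace.single i (1:ℝ)) := by
    ext y j
    simp [g1, Pi.single_apply]
  have hg1l : LocallyIntegrable g1 volume := by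
    rw [hg1]
    have : ∀ i, LocallyIntegrable (fun y => G i y • (EuclideanSpace.single i (1:ℝ) : EuclideanSpace ℝ (Fin N))) volume := by
      intro i
      rw [locallyIntegrable_iff]
      intro k hk
      exact ((hGl i).integrableOn_isCompact hk).smul_const _
    rw [locallyIntegrable_iff]
    intro k hk
    exact integrable_finsetSum _ (fun i _ => (this i).integrableOn_isCompact hk)
  have hg1le : ∀ y, ‖g1 y‖ ≤ ‖g y‖ := by
    intro y
    rw [EuclideanSpace.norm_eq, EuclideanSpace.norm_eq]
    apply Real.sqrt_le_sqrt
    apply Finset.sum_le_sum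
    intro i _
    simp only [g1, G]
    split_ifs
    · exact le_rfl
    · simp; positivity
  have hfm := hf.aestronglyMeasurable.aemeasurable
  have hgm := hg1l.aestronglyMeasurable.aemeasurable
  refine ⟨hfm.mk f, hgm.mk g1, ⟨hfm.measurable_mk, hgm.measurable_mk, ?_, ?_, ?_⟩, hfm.ae_eq_mk, ?_⟩
  · exact hf.congr hfm.ae_eq_mk
  · exact hg1l.congr hgm.ae_eq_mk
  · intro φ hφ hφs i
    have := hGw φ hφ hφs i
    have e1 : ∫ y, hfm.mk f y * fderiv ℝ φ y (EuclideanSpace.single i 1) =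
        ∫ y, f y * fderiv ℝ φ y (EuclideanSpace.single i 1) := by
      apply integral_congr_ae
      filter_upwards [hfm.ae_eq_mk] with y hy
      rw [hy]
    have e2 : ∫ y, hgm.mk g1 y i * φ y = ∫ y, G i y * φ y := by
      apply integral_congr_ae
      filter_upwards [hgm.ae_eq_mk] with y hy
      rw [← hy]
    rw [e1, e2, this]
  · calc _ = ∫⁻ x, gw x * ‖g1 x‖ₑ ^ 2 := by
          apply lintegral_congr_ae
          filter_upwards [hgm.ae_eq_mk] with y hy
          rw [hy]
      _ ≤ _ := by
          gcongr with x
          rw [← ofReal_norm, ← ofReal_norm]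
          exact ENNReal.ofReal_le_ofReal (hg1le x)

lemma weak_extract {N : ℕ} (F : ℕ → EuclideanSpace ℝ (Fin N) → ℝ) (hF : ∀ m, Measurable (F m))
    (M : ℝ≥0∞) (hM : M < ⊤) (hb : ∀ m, ∫⁻ x, ‖F m x‖ₑ ^ 2 ≤ M) :
    ∃ mk : ℕ → ℕ, StrictMono mk ∧ ∀ x r, ∃ l : ℝ,
      Tendsto (fun k => ∫ y in Metric.ball (x : EuclideanSpace ℝ (Fin N)) r, F (mk k) y) atTop (𝓝 l) := by
  have hn : ∀ m, eLpNorm (F m) 2 volume ^ 2 = ∫⁻ x, ‖F m x‖ₑ ^ 2 := by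
    intro m
    have := eLpNorm_nnreal_pow_eq_lintegral (f := F m) (μ := (volume : Measure (EuclideanSpace ℝ (Fin N)))) (p := 2) (by norm_num)
    simpa using this
  have hle : ∀ m, eLpNorm (F m) 2 volume ≤ M + 1 := by
    intro m
    by_contra hcon
    push Not at hcon
    have h1 : 1 ≤ eLpNorm (F m) 2 volume := le_add_self.trans hcon.le
    have h2 : eLpNorm (F m) 2 volume ≤ eLpNorm (F m) 2 volume ^ 2 := by
      rw [sq]; exact le_mul_of_one_le_left (by simp) h1
    have h3 := (h2.trans (hn m).le).trans (hb m)
    exact absurd (hcon.trans_le h3) (not_lt.2 le_self_add)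
  have hmem : ∀ m, MemLp (F m) 2 volume := fun m =>
    ⟨(hF m).aestronglyMeasurable, (hle m).trans_lt (by finiteness)⟩
  let u : ℕ → Lp ℝ 2 (volume : Measure (EuclideanSpace ℝ (Fin N))) := fun m => (hmem m).toLp
  have hu : ∀ m, ‖u m‖ ≤ (M + 1).toReal := by
    intro m
    rw [Lp.norm_toLp]
    exact ENNReal.toReal_mono (by finiteness) (hle m)
  let T : ℕ → WeakDual ℝ (Lp ℝ 2 (volume : Measure (EuclideanSpace ℝ (Fin N)))) := fun m =>
    StrongDual.toWeakDual (innerSL ℝ (u m))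
  have : Fact ((2:ℝ≥0∞) ≠ ⊤) := ⟨by simp⟩
  have : SecondCountableTopology (Lp ℝ 2 (volume : Measure (EuclideanSpace ℝ (Fin N)))) :=
    Lp.SecondCountableTopology
  have hseq := WeakDual.isSeqCompact_closedBall ℝ (Lp ℝ 2 (volume : Measure (EuclideanSpace ℝ (Fin N)))) 0 (M + 1).toReal
  obtain ⟨a, _, mk, hmk, ht⟩ := hseq (x := T) (by
    intro m
    simp only [Set.mem_preimage, mem_closedBall_zero_iff]
    change ‖innerSL ℝ (u m)‖ ≤ _
    rw [innerSL_apply_norm]; exact hu m)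
  refine ⟨mk, hmk, fun x r => ?_⟩
  let q := indicatorConstLp 2 (measurableSet_ball (x := x) (ε := r)) (measure_ball_lt_top (μ := volume)).ne (1:ℝ)
  refine ⟨a q, ?_⟩
  have h1 : Tendsto (fun k => T (mk k) q) atTop (𝓝 (a q)) :=
    ((WeakDual.eval_continuous q).tendsto a).comp ht
  refine h1.congr ?_
  intro k
  change inner ℝ (u (mk k)) q = _
  rw [real_inner_comm, L2.inner_indicatorConstLp_one]
  apply integral_congr_ae
  exact ae_restrict_of_ae (hmem (mk k)).coeFn_toLp

lemma avg_est {N : ℕ} (F : EuclideanSpace ℝ (Fin N) → ℝ) (hF : Measurable F) (hl : LocallyIntegrable F volume)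
    (M : ℝ≥0∞) (ht : ∀ h, ∫⁻ x, ‖F (x + h) - F x‖ₑ ^ 2 ≤ ‖h‖ₑ ^ 2 * M) (r : ℝ) (hr : 0 < r) :
    ∫⁻ x, ‖(∫ y in Metric.ball x r, F y) / volume.real (Metric.ball (0 : EuclideanSpace ℝ (Fin N)) r) - F x‖ₑ ^ 2
      ≤ ENNReal.ofReal r ^ 2 * M := by
  let B := Metric.ball (0 : EuclideanSpace ℝ (Fin N)) r
  have hB0 : volume B ≠ 0 := (Metric.measure_ball_pos _ _ hr).ne'
  have hBt : volume B ≠ ⊤ := measure_ball_lt_top.ne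
  let ν : Measure (EuclideanSpace ℝ (Fin N)) := (volume B)⁻¹ • volume.restrict B
  have hν : IsProbabilityMeasure ν := ⟨by
    simp [ν, ENNReal.inv_mul_cancel hB0 hBt]⟩
  have hνB : ∀ᵐ h ∂ν, ‖h‖ ≤ r := by
    apply Measure.ae_smul_measure
    filter_upwards [ae_restrict_mem measurableSet_ball] with h hh
    exact (mem_ball_zero_iff.1 hh).le
  have e : ∀ x, (∫ y in Metric.ball x r, F y) / volume.real B - F x = ∫ h, (F (x + h) - F x) ∂ν := by
    intro x
    have him : ∫ h in B, F (x + h) = ∫ y in Metric.ball x r, F y := by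
      have := (measurePreserving_add_left volume x).setIntegral_preimage_emb
        (measurableEmbedding_addLeft x) F (Metric.ball x r)
      rw [← this]
      congr 2
      ext h; simp [B]
    have hi : IntegrableOn (fun h => F (x + h)) B := by
      have := (measurePreserving_add_left volume x).integrableOn_comp_preimage
        (measurableEmbedding_addLeft x) (f := F) (s := Metric.ball x r)
      have h2 := this.2 ((hl.integrableOn_isCompact (isCompact_closedBall x r)).mono_set Metric.ball_subset_closedBall)
      have h3 : (fun h => x + h) ⁻¹' Metric.ball x r = B := by ext h; simp [B]
      rwa [h3] at h2
    have hiν : Integrable (fun h => F (x + h)) ν := hi.smul_measure (by simp [hB0])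
    rw [integral_sub hiν (integrable_const _)]
    rw [integral_smul_measure, him]
    simp [Measure.real, div_eq_inv_mul]
  calc _ = ∫⁻ x, ‖∫ h, (F (x + h) - F x) ∂ν‖ₑ ^ 2 := by
        congr 1; ext x; rw [← e]
    _ ≤ ∫⁻ x, ∫⁻ h, ‖F (x + h) - F x‖ₑ ^ 2 ∂ν := lintegral_mono fun x => jensen_sq ν _
    _ = ∫⁻ h, ∫⁻ x, ‖F (x + h) - F x‖ₑ ^ 2 ∂volume ∂ν := by
        rw [lintegral_lintegral_swap]; fun_prop
    _ ≤ ∫⁻ h, ENNReal.ofReal r ^ 2 * M ∂ν := by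
        apply lintegral_mono_ae
        filter_upwards [hνB] with h hh
        refine (ht h).trans ?_
        gcongr
        rw [← ofReal_norm]; exact ENNReal.ofReal_le_ofReal hh
    _ = _ := by simp

lemma avg_tendsto {N : ℕ} (F : ℕ → EuclideanSpace ℝ (Fin N) → ℝ) (hF : ∀ m, Measurable (F m))
    (M : ℝ≥0∞) (hM : M < ⊤) (hb : ∀ m, ∫⁻ x, ‖F m x‖ₑ ^ 2 ≤ M)
    (r : ℝ) (hr : 0 < r) (a : EuclideanSpace ℝ (Fin N) → ℝ) 
    (hl : ∀ x, Tendsto (fun k => ∫ y in Metric.ball (x : EuclideanSpace ℝ (Fin N)) r, F k y) atTop (𝓝 (a x)))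
    (R : ℝ) :
    Measurable a ∧ (∀ k, Measurable fun x => ∫ y in Metric.ball (x : EuclideanSpace ℝ (Fin N)) r, F k y) ∧
    Tendsto (fun k => ∫⁻ x in Metric.closedBall 0 R,
      ‖(∫ y in Metric.ball (x : EuclideanSpace ℝ (Fin N)) r, F k y) / volume.real (Metric.ball (0 : EuclideanSpace ℝ (Fin N)) r)
        - a x / volume.real (Metric.ball (0 : EuclideanSpace ℝ (Fin N)) r)‖ₑ ^ 2) atTop (𝓝 0) := by
  have hm : ∀ k, Measurable fun x => ∫ y in Metric.ball (x : EuclideanSpace ℝ (Fin N)) r, F k y := by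
    intro k
    have : (fun x => ∫ y in Metric.ball (x : EuclideanSpace ℝ (Fin N)) r, F k y) =
      fun x => ∫ y, (fun p : EuclideanSpace ℝ (Fin N) × EuclideanSpace ℝ (Fin N) =>
        {p : EuclideanSpace ℝ (Fin N) × EuclideanSpace ℝ (Fin N) | dist p.2 p.1 < r}.indicator
          (fun p => F k p.2) p) (x, y) := by
      ext x
      rw [← integral_indicator measurableSet_ball]
      rfl
    rw [this]
    refine (StronglyMeasurable.integral_prod_right' ?_).measurable
    apply Measurable.stronglyMeasurable
    apply Measurable.indicator
    · exact (hF k).comp measurable_snd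
    · exact measurableSet_lt (by fun_prop) (by fun_prop)
  have hma : Measurable a := measurable_of_tendsto_metrizable hm (tendsto_pi_nhds.2 hl)
  refine ⟨hma, hm, ?_⟩
  let V := volume.real (Metric.ball (0 : EuclideanSpace ℝ (Fin N)) r)
  -- uniform bound
  let Bd : ℝ≥0∞ := volume (Metric.ball (0 : EuclideanSpace ℝ (Fin N)) r) * M
  have hbd : ∀ k x, ‖∫ y in Metric.ball (x : EuclideanSpace ℝ (Fin N)) r, F k y‖ₑ ^ 2 ≤ Bd := by
    intro k x
    have hvx : volume (Metric.ball x r) = volume (Metric.ball (0 : EuclideanSpace ℝ (Fin N)) r) :=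
      Measure.addHaar_ball_center _ _ _
    have h1 : ‖∫ y in Metric.ball x r, F k y‖ₑ ≤ ∫⁻ y in Metric.ball x r, ‖F k y‖ₑ :=
      enorm_integral_le_lintegral_enorm _
    have h2 := ENNReal.lintegral_mul_le_Lp_mul_Lq (volume.restrict (Metric.ball x r))
      (Real.HolderConjugate.two_two) (f := fun _ => 1) (g := fun y => ‖F k y‖ₑ) (by fun_prop)
      (by have := hF k; fun_prop)
    simp only [Pi.mul_apply, one_mul] at h2
    have h3 := h1.trans h2
    calc _ ≤ _ := pow_le_pow_left' h3 2
      _ = volume (Metric.ball x r) * ∫⁻ y in Metric.ball x r, ‖F k y‖ₑ ^ 2 := by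
          rw [mul_pow, ← ENNReal.rpow_natCast, ← ENNReal.rpow_natCast, ← ENNReal.rpow_mul,
            ← ENNReal.rpow_mul]
          simp
      _ ≤ Bd := by
          rw [hvx]
          refine mul_le_mul_right (?_) _
          exact (setLIntegral_le_lintegral _ _).trans (hb k)
  have hba : ∀ x, ‖a x‖ₑ ^ 2 ≤ Bd := by
    intro x
    have h1 := (ENNReal.continuous_pow 2).tendsto _ |>.comp ((hl x).enorm)
    exact le_of_tendsto h1 (Eventually.of_forall fun k => hbd k x)
  have h0 : (0 : ℝ≥0∞) = ∫⁻ x in Metric.closedBall (0 : EuclideanSpace ℝ (Fin N)) R, 0 := by simp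
  rw [h0]
  apply tendsto_lintegral_of_dominated_convergence (fun _ => 2 * (Bd + Bd) * ‖V⁻¹‖ₑ ^ 2)
  · intro k
    have := hm k
    fun_prop
  · intro k
    apply ae_of_all
    intro x
    have : (∫ y in Metric.ball (x : EuclideanSpace ℝ (Fin N)) r, F k y) / V - a x / V =
      ((∫ y in Metric.ball (x : EuclideanSpace ℝ (Fin N)) r, F k y) + (- a x)) * V⁻¹ := by
        ring
    change ‖(∫ y in Metric.ball (x : EuclideanSpace ℝ (Fin N)) r, F k y) / V - a x / V‖ₑ ^ 2 ≤ _
    rw [this, enorm_mul, mul_pow]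
    refine mul_le_mul_left (?_) _
    refine (enorm_add_sq_le _ _).trans ?_
    rw [enorm_neg]
    exact mul_le_mul_right (add_le_add (hbd k x) (hba x)) _
  · simp only [lintegral_const]
    have : volume (Metric.closedBall (0 : EuclideanSpace ℝ (Fin N)) R) ≠ ⊤ := measure_closedBall_lt_top.ne
    have h2 : Bd ≠ ⊤ := ENNReal.mul_ne_top measure_ball_lt_top.ne hM.ne
    rw [Measure.restrict_apply_univ]
    finiteness
  · apply ae_of_all
    intro x
    have h1 := ((hl x).div_const V).sub_const (a x / V)
    rw [sub_self] at h1
    have h2 := (ENNReal.continuous_pow 2).tendsto _ |>.comp h1.enorm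
    rw [show ‖(0:ℝ)‖ₑ ^ 2 = 0 by simp] at h2
    exact h2

lemma cauchy_ball {N : ℕ} (F : ℕ → EuclideanSpace ℝ (Fin N) → ℝ) (hF : ∀ m, Measurable (F m))
    (hli : ∀ m, LocallyIntegrable (F m) volume)
    (M : ℝ≥0∞) (hM : M < ⊤) (hb : ∀ m, ∫⁻ x, ‖F m x‖ₑ ^ 2 ≤ M)
    (ht : ∀ m h, ∫⁻ x, ‖F m (x + h) - F m x‖ₑ ^ 2 ≤ ‖h‖ₑ ^ 2 * M)
    (hl : ∀ x r, ∃ l : ℝ,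
      Tendsto (fun k => ∫ y in Metric.ball (x : EuclideanSpace ℝ (Fin N)) r, F k y) atTop (𝓝 l))
    (R : ℝ) (ε : ℝ≥0∞) (hε : 0 < ε) :
    ∃ n0, ∀ m ≥ n0, ∀ n ≥ n0, ∫⁻ x in Metric.closedBall 0 R, ‖F m x - F n x‖ₑ ^ 2 ≤ ε := by
  have hε16 : 0 < ε / 16 := ENNReal.div_pos hε.ne' (by simp)
  obtain ⟨r, hr, hrε⟩ : ∃ r : ℝ, 0 < r ∧ ENNReal.ofReal r ^ 2 * M ≤ ε / 16 := by
    have h1 : Tendsto (fun r : ℝ => ENNReal.ofReal r ^ 2 * M) (𝓝[>] 0) (𝓝 (ENNReal.ofReal 0 ^ 2 * M)) := by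
      refine ENNReal.Tendsto.mul_const ?_ (Or.inr hM.ne)
      refine ((ENNReal.continuous_pow 2).tendsto _).comp ?_
      exact (ENNReal.continuous_ofReal.tendsto 0).mono_left nhdsWithin_le_nhds
    rw [show ENNReal.ofReal 0 ^ 2 * M = 0 by simp] at h1
    have h2 := h1.eventually (ge_mem_nhds hε16)
    obtain ⟨r, h3, h4⟩ := (h2.and self_mem_nhdsWithin).exists
    exact ⟨r, h4, h3⟩
  choose a ha using fun x => hl x r
  obtain ⟨hma, hmav, hT⟩ := avg_tendsto F hF M hM hb r hr a ha R
  obtain ⟨n0, hn0⟩ := eventually_atTop.1 (hT.eventually (ge_mem_nhds hε16))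
  refine ⟨n0, fun m hm n hn => ?_⟩
  set V := volume.real (Metric.ball (0 : EuclideanSpace ℝ (Fin N)) r) with hV
  let A : ℕ → EuclideanSpace ℝ (Fin N) → ℝ := fun k x => (∫ y in Metric.ball x r, F k y) / V
  have hA : ∀ k, Measurable (A k) := fun k => (hmav k).div_const V
  have hmaV : Measurable fun x => a x / V := hma.div_const V
  have e1 : ∀ k, ∫⁻ x in Metric.closedBall 0 R, ‖A k x - F k x‖ₑ ^ 2 ≤ ε / 16 := fun k =>
    (setLIntegral_le_lintegral _ _).trans ((avg_est (F k) (hF k) (hli k) M (ht k) r hr).trans hrε)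
  have e2 : ∀ k ≥ n0, ∫⁻ x in Metric.closedBall 0 R, ‖A k x - a x / V‖ₑ ^ 2 ≤ ε / 16 := hn0
  have pw : ∀ x, ‖F m x - F n x‖ₑ ^ 2 ≤ 4 * ((‖A m x - F m x‖ₑ ^ 2 + ‖A m x - a x / V‖ₑ ^ 2) +
      (‖A n x - F n x‖ₑ ^ 2 + ‖A n x - a x / V‖ₑ ^ 2)) := by
    intro x
    have q : F m x - F n x = (-(A m x - F m x) + (A m x - a x / V)) +
      ((A n x - F n x) + -(A n x - a x / V)) := by ring
    rw [q]
    refine (enorm_add_sq_le _ _).trans ?_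
    refine (mul_le_mul_right (add_le_add (enorm_add_sq_le _ _) (enorm_add_sq_le _ _)) _).trans ?_
    rw [enorm_neg, enorm_neg, ← mul_add, ← mul_assoc]
    norm_num
  refine (lintegral_mono pw).trans ?_
  have hFm := hF m
  have hFn := hF n
  have hAm := hA m
  have hAn := hA n
  rw [lintegral_const_mul _ (by fun_prop), lintegral_add_left (by fun_prop),
    lintegral_add_left (by fun_prop), lintegral_add_left (by fun_prop)]
  refine (mul_le_mul_right (add_le_add (add_le_add (e1 m) (e2 m hm)) (add_le_add (e1 n) (e2 n hn))) _).trans ?_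
  have : (4:ℝ≥0∞) * ((ε / 16 + ε / 16) + (ε / 16 + ε / 16)) = 16 * (ε / 16) := by ring
  rw [this, ENNReal.mul_div_cancel (by simp) (by simp)]

lemma split_tail {N : ℕ} (D : EuclideanSpace ℝ (Fin N) → ℝ) (hD : Measurable D) (R : ℝ) (hR : 0 < R) :
    ∫⁻ x, gw x * ‖D x‖ₑ ^ 2 ≤ ENNReal.ofReal (Real.exp (R ^ 2 / 4)) * (∫⁻ x in Metric.closedBall 0 R, ‖D x‖ₑ ^ 2)
      + (ENNReal.ofReal R ^ 2)⁻¹ * ∫⁻ x, gw x * (‖x‖ₑ ^ 2 * ‖D x‖ₑ ^ 2) := by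
  rw [← lintegral_add_compl _ (Metric.isClosed_closedBall (x := (0 : EuclideanSpace ℝ (Fin N))) (ε := R)).measurableSet]
  have hgw := gw_measurable (N := N)
  refine add_le_add ?_ ?_
  · rw [← lintegral_const_mul _ (by fun_prop)]
    refine setLIntegral_mono (by fun_prop) fun x hx => ?_
    refine mul_le_mul_left ?_ _
    unfold gw
    apply ENNReal.ofReal_le_ofReal
    apply Real.exp_le_exp.2
    have := mem_closedBall_zero_iff.1 hx
    have h0 := norm_nonneg x
    nlinarith
  · rw [← lintegral_const_mul _ (by fun_prop)]
    refine le_trans ?_ (setLIntegral_le_lintegral (Metric.closedBall 0 R)ᶜ _)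
    refine setLIntegral_mono (by fun_prop) fun x hx => ?_
    have hx' : R < ‖x‖ := by simpa using hx
    have h1 : ENNReal.ofReal R ^ 2 ≤ ‖x‖ₑ ^ 2 := by
      rw [← ofReal_norm]
      exact pow_le_pow_left' (ENNReal.ofReal_le_ofReal hx'.le) 2
    have h0 : ENNReal.ofReal R ^ 2 ≠ 0 := by simp [hR]
    have hT : ENNReal.ofReal R ^ 2 ≠ ⊤ := by finiteness
    calc gw x * ‖D x‖ₑ ^ 2 = ((ENNReal.ofReal R ^ 2)⁻¹ * ENNReal.ofReal R ^ 2) * (gw x * ‖D x‖ₑ ^ 2) := by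
          rw [ENNReal.inv_mul_cancel h0 hT, one_mul]
      _ ≤ ((ENNReal.ofReal R ^ 2)⁻¹ * ‖x‖ₑ ^ 2) * (gw x * ‖D x‖ₑ ^ 2) := by gcongr
      _ = _ := by ring

lemma cauchy_gw {N : ℕ} (F : ℕ → EuclideanSpace ℝ (Fin N) → ℝ) (hF : ∀ m, Measurable (F m))
    (hli : ∀ m, LocallyIntegrable (F m) volume)
    (M : ℝ≥0∞) (hM : M < ⊤) (hb : ∀ m, ∫⁻ x, ‖F m x‖ₑ ^ 2 ≤ M)
    (htail : ∀ m, ∫⁻ x, gw x * (‖x‖ₑ ^ 2 * ‖F m x‖ₑ ^ 2) ≤ M)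
    (ht : ∀ m h, ∫⁻ x, ‖F m (x + h) - F m x‖ₑ ^ 2 ≤ ‖h‖ₑ ^ 2 * M)
    (hl : ∀ x r, ∃ l : ℝ,
      Tendsto (fun k => ∫ y in Metric.ball (x : EuclideanSpace ℝ (Fin N)) r, F k y) atTop (𝓝 l))
    (ε : ℝ≥0∞) (hε : 0 < ε) :
    ∃ n0, ∀ m ≥ n0, ∀ n ≥ n0, ∫⁻ x, gw x * ‖F m x - F n x‖ₑ ^ 2 ≤ ε := by
  have hgw := gw_measurable (N := N)
  have hε2 : 0 < ε / 2 := ENNReal.half_pos hε.ne'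
  obtain ⟨R, hR, hRε⟩ : ∃ R : ℝ, 0 < R ∧ (ENNReal.ofReal R ^ 2)⁻¹ * (4 * M) ≤ ε / 2 := by
    have h1 : Tendsto (fun r : ℝ => (ENNReal.ofReal r ^ 2)⁻¹ * (4 * M)) atTop (𝓝 ((⊤ ^ 2)⁻¹ * (4 * M))) := by
      refine ENNReal.Tendsto.mul_const ?_ (Or.inr (by finiteness))
      refine ((continuous_inv (G := ℝ≥0∞)).tendsto _).comp ?_
      refine ((ENNReal.continuous_pow 2).tendsto _).comp ?_
      exact ENNReal.tendsto_ofReal_atTop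
    rw [show ((⊤:ℝ≥0∞) ^ 2)⁻¹ * (4 * M) = 0 by simp] at h1
    obtain ⟨r, h3, h4⟩ := ((h1.eventually (ge_mem_nhds hε2)).and (eventually_gt_atTop 0)).exists
    exact ⟨r, h4, h3⟩
  set W := ENNReal.ofReal (Real.exp (R ^ 2 / 4)) with hW
  have hW0 : W ≠ 0 := by simp [hW, Real.exp_pos]
  have hWt : W ≠ ⊤ := by simp [hW]
  obtain ⟨n0, hn0⟩ := cauchy_ball F hF hli M hM hb ht hl R (ε / 2 / W) (ENNReal.div_pos hε2.ne' hWt)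
  refine ⟨n0, fun m hm n hn => ?_⟩
  have hFm := hF m
  have hFn := hF n
  refine (split_tail (fun x => F m x - F n x) (by fun_prop) R hR).trans ?_
  rw [← ENNReal.add_halves ε]
  refine add_le_add ?_ ?_
  · refine (mul_le_mul_right (hn0 m hm n hn) _).trans ?_
    rw [ENNReal.mul_div_cancel hW0 hWt]
  · refine (mul_le_mul_right ?_ _).trans hRε
    calc ∫⁻ x, gw x * (‖x‖ₑ ^ 2 * ‖F m x - F n x‖ₑ ^ 2)
        ≤ ∫⁻ x, 2 * (gw x * (‖x‖ₑ ^ 2 * ‖F m x‖ₑ ^ 2) + gw x * (‖x‖ₑ ^ 2 * ‖F n x‖ₑ ^ 2)) := by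
          refine lintegral_mono fun x => ?_
          have := enorm_add_sq_le (F m x) (-F n x)
          rw [enorm_neg, ← sub_eq_add_neg] at this
          calc _ ≤ gw x * (‖x‖ₑ ^ 2 * (2 * (‖F m x‖ₑ ^ 2 + ‖F n x‖ₑ ^ 2))) := by gcongr
            _ = _ := by ring
      _ ≤ 2 * (M + M) := by
          rw [lintegral_const_mul _ (by fun_prop), lintegral_add_left (by fun_prop)]
          exact mul_le_mul_right (add_le_add (htail m) (htail n)) _
      _ = 4 * M := by ring

lemma complete_gw {N : ℕ} (F : ℕ → EuclideanSpace ℝ (Fin N) → ℝ) (hF : ∀ m, Measurable (F m))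
    (hb : ∀ m, ∫⁻ x, gw x * ‖F m x‖ₑ ^ 2 < ⊤)
    (hc : ∀ ε : ℝ≥0∞, 0 < ε → ∃ n0, ∀ m ≥ n0, ∀ n ≥ n0, ∫⁻ x, gw x * ‖F m x - F n x‖ₑ ^ 2 ≤ ε) :
    ∃ fL : EuclideanSpace ℝ (Fin N) → ℝ, ∫⁻ x, gw x * ‖fL x‖ₑ ^ 2 < ⊤ ∧
      Tendsto (fun k => ∫⁻ x, gw x * ‖F k x - fL x‖ₑ ^ 2) atTop (𝓝 0) := by
  have hgw := gw_measurable (N := N)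
  let μ : Measure (EuclideanSpace ℝ (Fin N)) := volume.withDensity gw
  have hn : ∀ u : EuclideanSpace ℝ (Fin N) → ℝ, Measurable u →
      eLpNorm u 2 μ ^ 2 = ∫⁻ x, gw x * ‖u x‖ₑ ^ 2 := by
    intro u hu
    have := eLpNorm_nnreal_pow_eq_lintegral (f := u) (μ := μ) (p := 2) (by norm_num)
    have h2 : eLpNorm u 2 μ ^ 2 = ∫⁻ x, ‖u x‖ₑ ^ 2 ∂μ := by simpa using this
    rw [h2, lintegral_withDensity_eq_lintegral_mul _ hgw (by fun_prop)]
    rfl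
  have hmem : ∀ m, MemLp (F m) 2 μ := fun m => by
    refine ⟨(hF m).aestronglyMeasurable, ?_⟩
    have := hb m
    rw [← hn _ (hF m)] at this
    by_contra hcon
    rw [not_lt, top_le_iff] at hcon
    simp [hcon] at this
  let u : ℕ → Lp ℝ 2 μ := fun m => (hmem m).toLp
  have hcs : CauchySeq u := by
    rw [EMetric.cauchySeq_iff]
    intro ε hε
    obtain ⟨δ, hδ, hδε⟩ := exists_between hε
    obtain ⟨n0, hn0⟩ := hc (δ ^ 2) (by positivity)
    refine ⟨n0, fun m hm n hn' => ?_⟩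
    rw [Lp.edist_toLp_toLp]
    refine lt_of_le_of_lt ?_ hδε
    have := hn0 m hm n hn'
    have e := hn _ ((hF m).sub (hF n))
    simp only [Pi.sub_apply] at e
    rw [← e] at this
    exact (ENNReal.pow_le_pow_left_iff two_ne_zero).1 this
  obtain ⟨L, hL⟩ := cauchySeq_tendsto_of_complete hcs
  have hLm : Measurable L := (Lp.stronglyMeasurable L).measurable
  refine ⟨L, ?_, ?_⟩
  · rw [← hn _ hLm]
    have := (Lp.memLp L).2
    finiteness
  · rw [tendsto_iff_edist_tendsto_0] at hL
    have h2 := (ENNReal.continuous_pow 2).tendsto _ |>.comp hL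
    rw [show (0:ℝ≥0∞) ^ 2 = 0 by simp] at h2
    refine h2.congr fun k => ?_
    change edist (u k) L ^ 2 = _
    have e := hn _ ((hF k).sub hLm)
    simp only [Pi.sub_apply] at e
    rw [Lp.edist_def, ← e]
    congr 1
    apply eLpNorm_congr_ae
    filter_upwards [(hmem k).coeFn_toLp] with x hx
    simp only [Pi.sub_apply]
    rw [hx]

/-- Compactness of the embedding `H¹(K) ↪ L²(K)`. -/
theorem stmt_8 (N : ℕ) (hN : 1 ≤ N)
    (f : ℕ → EuclideanSpace ℝ (Fin N) → ℝ)
    (g : ℕ → EuclideanSpace ℝ (Fin N) → EuclideanSpace ℝ (Fin N))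
    (hfg : ∀ m, HasWeakGradient (f m) (g m))
    (C : ℝ≥0∞) (hC : C < ⊤)
    (hbdd : ∀ m,
      (∫⁻ y : EuclideanSpace ℝ (Fin N),
          ENNReal.ofReal (Real.exp (‖y‖ ^ 2 / 4) * (f m y) ^ 2))
        + (∫⁻ y : EuclideanSpace ℝ (Fin N),
            ENNReal.ofReal (Real.exp (‖y‖ ^ 2 / 4) * ‖g m y‖ ^ 2)) ≤ C) :
    ∃ mk : ℕ → ℕ, StrictMono mk ∧
      ∃ fL : EuclideanSpace ℝ (Fin N) → ℝ,
        (∫⁻ y : EuclideanSpace ℝ (Fin N),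
            ENNReal.ofReal (Real.exp (‖y‖ ^ 2 / 4) * (fL y) ^ 2)) < ⊤ ∧
        Tendsto
          (fun k => ∫⁻ y : EuclideanSpace ℝ (Fin N),
            ENNReal.ofReal (Real.exp (‖y‖ ^ 2 / 4) * (f (mk k) y - fL y) ^ 2))
          atTop (nhds 0) := by
  obtain ⟨c, hc, hest⟩ := good_estimates N
  choose F G hgood hae hG using fun m => regularize (hfg m)
  have hgw := gw_measurable (N := N)
  have hsum : ∀ m, (∫⁻ x, gw x * ‖F m x‖ₑ ^ 2) + ∫⁻ x, gw x * ‖G m x‖ₑ ^ 2 ≤ C := by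
    intro m
    refine le_trans ?_ (hbdd m)
    simp only [gw_mul_sq', enorm_norm]
    refine add_le_add (le_of_eq ?_) (hG m)
    apply lintegral_congr_ae
    filter_upwards [hae m] with x hx
    rw [hx]
  have hFC : ∀ m, ∫⁻ x, gw x * ‖F m x‖ₑ ^ 2 ≤ C := fun m => le_self_add.trans (hsum m)
  have hM : c * C + C < ⊤ := by finiteness
  have hcM : ∀ m, c * ((∫⁻ x, gw x * ‖F m x‖ₑ ^ 2) + ∫⁻ x, gw x * ‖G m x‖ₑ ^ 2) ≤ c * C + C := fun m =>
    (mul_le_mul_right (hsum m) _).trans le_self_add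
  have hb : ∀ m, ∫⁻ x, ‖F m x‖ₑ ^ 2 ≤ c * C + C := by
    intro m
    refine le_trans (lintegral_mono fun x => ?_) ((hFC m).trans le_add_self)
    exact le_mul_of_one_le_left (by simp) (one_le_gw x)
  obtain ⟨mk, hmk, hl⟩ := weak_extract F (fun m => (hgood m).mf) _ hM hb
  obtain ⟨fL, h1, h2⟩ := complete_gw (fun k => F (mk k)) (fun k => (hgood _).mf)
    (fun k => (hFC _).trans_lt hC)
    (fun ε hε => cauchy_gw (fun k => F (mk k)) (fun k => (hgood _).mf) (fun k => (hgood _).lf) _ hM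
      (fun k => hb _) (fun k => (hest _ _ (hgood (mk k))).1.trans (hcM _))
      (fun k h => ((hest _ _ (hgood (mk k))).2 h).trans (mul_le_mul_right (hcM _) _)) hl ε hε)
  refine ⟨mk, hmk, fL, ?_, ?_⟩
  · simpa only [gw_mul_sq'] using h1
  · simp only [gw_mul_sq']
    refine h2.congr fun k => ?_
    apply lintegral_congr_ae
    filter_upwards [hae (mk k)] with x hx
    rw [hx]
end

section
/- One-dimensional weighted Sobolev embedding into L^∞: Let N = 1 and K(y) = exp(y²/4) for y ∈ ℝ. If v : ℝ → ℝ is locally integrable with a weak derivative g : ℝ → ℝ such that ∫_ℝ K(y)( |v(y)|² + |g(y)|² ) dy < ∞, then the function y ↦ K(y)^{1/2} v(y) = exp(y²/8) v(y) is essentially bounded on ℝ; i.e. there exists M > 0 with |exp(y²/8) v(y)| ≤ M for almost every y ∈ ℝ. -/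
open MeasureTheory

open Set Filter Topology

lemma aux_radius {f : ℝ → ℝ} (hf : HasCompactSupport f) :
    ∃ R > (0 : ℝ), ∀ x, R ≤ |x| → f x = 0 := by
  obtain ⟨R, hR⟩ := hf.isCompact.isBounded.subset_ball 0
  refine ⟨max R 1, by positivity, fun x hx => ?_⟩
  by_contra h
  have := hR (subset_tsupport f h)
  simp only [Metric.mem_ball, dist_zero_right, Real.norm_eq_abs] at this
  have := le_max_left R 1
  linarith

lemma aux_primitive {ψ : ℝ → ℝ} (hs : ContDiff ℝ (⊤ : ℕ∞) ψ) (hc : HasCompactSupport ψ)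
    (h0 : ∫ x, ψ x = 0) :
    ∃ φ : ℝ → ℝ, ContDiff ℝ (⊤ : ℕ∞) φ ∧ HasCompactSupport φ ∧ deriv φ = ψ := by
  obtain ⟨R, hR, hz⟩ := aux_radius hc
  have hd : ∀ x, HasDerivAt (fun x => ∫ t in (-R)..x, ψ t) (ψ x) x := fun x =>
    hs.continuous.integral_hasStrictDerivAt _ _ |>.hasDerivAt
  have hderiv : deriv (fun x => ∫ t in (-R)..x, ψ t) = ψ := funext fun x => (hd x).deriv
  refine ⟨fun x => ∫ t in (-R)..x, ψ t, ?_, ?_, hderiv⟩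
  · refine contDiff_infty_iff_deriv.2 ⟨fun x => (hd x).differentiableAt, ?_⟩
    rw [hderiv]; exact hs
  · refine HasCompactSupport.intro (isCompact_Icc (a := -R) (b := R)) fun x hx => ?_
    rcases lt_or_ge x (-R) with h | h
    · have : ∀ t ∈ uIcc (-R) x, ψ t = 0 := by
        intro t ht
        rw [uIcc_of_ge h.le] at ht
        apply hz
        rw [abs_of_nonpos (by linarith [ht.2])]
        linarith [ht.2]
      simpa using intervalIntegral.integral_congr (g := fun _ => (0:ℝ)) this
    · have hx' : R < x := by
        by_contra h'
        exact hx ⟨h, not_lt.1 h'⟩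
      change ∫ t in (-R)..x, ψ t = 0
      rw [intervalIntegral.integral_eq_integral_of_support_subset, h0]
      intro t ht
      have : |t| < R := by
        by_contra h'
        exact ht (hz t (not_lt.1 h'))
      rw [abs_lt] at this
      exact ⟨this.1, by linarith⟩

lemma aux_int {u ψ : ℝ → ℝ} (hu : LocallyIntegrable u volume) (hψ : Continuous ψ)
    (hc : HasCompactSupport ψ) : Integrable (fun x => u x * ψ x) := by
  have := hu.integrable_smul_right_of_hasCompactSupport hψ hc
  simpa [smul_eq_mul] using this

lemma aux_dbr {u : ℝ → ℝ} (hu : LocallyIntegrable u volume)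
    (h : ∀ φ : ℝ → ℝ, ContDiff ℝ (⊤ : ℕ∞) φ → HasCompactSupport φ →
      ∫ y : ℝ, u y * deriv φ y = 0) : ∃ c : ℝ, ∀ᵐ y : ℝ, u y = c := by
  let b : ContDiffBump (0 : ℝ) := ⟨1, 2, by norm_num, by norm_num⟩
  let χ : ℝ → ℝ := b.normed volume
  have hχs : ContDiff ℝ (⊤ : ℕ∞) χ := b.contDiff_normed
  have hχc : HasCompactSupport χ := b.hasCompactSupport_normed
  have hχ1 : ∫ x, χ x = 1 := b.integral_normed
  have hχi : Integrable χ := b.integrable_normed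
  refine ⟨∫ y, u y * χ y, ?_⟩
  set c := ∫ y, u y * χ y with hcdef
  refine ae_eq_of_integral_contDiff_smul_eq hu (locallyIntegrable_const c) ?_
  intro ψ hψ hψc
  have hψi : Integrable ψ := hψ.continuous.integrable_of_hasCompactSupport hψc
  set m := ∫ x, ψ x with hm
  have hmc : HasCompactSupport (fun x => m * χ x) := hχc.mul_left (f := fun _ => m)
  have hms : ContDiff ℝ (⊤ : ℕ∞) (fun x => m * χ x) := contDiff_const.mul hχs
  obtain ⟨φ, hφ, hφc, hφd⟩ := aux_primitive (ψ := fun x => ψ x - m * χ x)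
    (hψ.sub hms) (hψc.sub hmc) (by
      rw [integral_sub hψi (hχi.const_mul m), integral_const_mul, hχ1]; simp [hm])
  have := h φ hφ hφc
  rw [hφd] at this
  have e : ∀ y, u y * (ψ y - m * χ y) = u y * ψ y - m * (u y * χ y) := fun y => by ring
  simp only [e] at this
  rw [integral_sub (aux_int hu hψ.continuous hψc)
    ((aux_int hu hχs.continuous hχc).const_mul m), integral_const_mul] at this
  simp only [smul_eq_mul]
  rw [integral_mul_const]
  simp only [mul_comm (ψ _)]
  linarith

lemma aux_ibp {g φ : ℝ → ℝ} (hg : Integrable g) (hφ : ContDiff ℝ (⊤ : ℕ∞) φ)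
    (hc : HasCompactSupport φ) :
    ∫ y, (∫ t in (0:ℝ)..y, g t) * deriv φ y = -∫ y, g y * φ y := by
  obtain ⟨R, hR, hz⟩ := aux_radius hc
  obtain ⟨R', hR', hz'⟩ := aux_radius hc.deriv
  set S := max R R' + 1 with hS
  have hS1 : R < S := by have := le_max_left R R'; linarith
  have hS2 : R' < S := by have := le_max_right R R'; linarith
  have h1 : AbsolutelyContinuousOnInterval (fun x => ∫ t in (0:ℝ)..x, g t) (-S) S :=
    hg.intervalIntegrable.absolutelyContinuousOnInterval_intervalIntegral (by
      rw [uIcc_of_le (by linarith)]; constructor <;> linarith)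
  have h2 : AbsolutelyContinuousOnInterval φ (-S) S :=
    ((hφ.of_le (by exact_mod_cast le_top)).contDiffOn).absolutelyContinuousOnInterval
  have key := h1.integral_mul_deriv_eq_deriv_mul h2
  have supp : ∀ {f : ℝ → ℝ} {r : ℝ}, r < S → (∀ x, r ≤ |x| → f x = 0) →
      Function.support f ⊆ Ioc (-S) S := by
    intro f r hr hf t ht
    have : |t| < r := by
      by_contra h'
      exact ht (hf t (not_lt.1 h'))
    rw [abs_lt] at this
    exact ⟨by linarith, by linarith⟩
  have e1 : φ S = 0 := hz S (by rw [abs_of_pos (by linarith)]; linarith)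
  have e2 : φ (-S) = 0 := hz (-S) (by rw [abs_neg, abs_of_pos (by linarith)]; linarith)
  have e3 : ∫ x in (-S)..S, deriv (fun x => ∫ t in (0:ℝ)..x, g t) x * φ x
      = ∫ x in (-S)..S, g x * φ x := by
    apply intervalIntegral.integral_congr_ae
    filter_upwards [LocallyIntegrable.ae_hasDerivAt_integral hg.locallyIntegrable] with x hx _
    rw [(hx 0).deriv]
  rw [e1, e2, e3,
    intervalIntegral.integral_eq_integral_of_support_subset
      (f := fun x => g x * φ x) (supp hS1 (fun x hx => by simp [hz x hx])),
    intervalIntegral.integral_eq_integral_of_support_subset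
      (f := fun x => (∫ t in (0:ℝ)..x, g t) * deriv φ x)
      (supp hS2 (fun x hx => by simp [hz' x hx]))] at key
  simpa using key

lemma aux_gauss : Integrable (fun s : ℝ => Real.exp (-(s ^ 2) / 4)) := by
  have := integrable_exp_neg_mul_sq (b := 1/4) (by norm_num)
  refine this.congr (ae_of_all _ fun s => ?_)
  simp only; congr 1; ring

lemma aux_pt (y s a b : ℝ) (h : y ^ 2 + (s - y) ^ 2 ≤ s ^ 2) :
    Real.exp (y ^ 2 / 8) * |a| ≤ (Real.exp (s ^ 2 / 4) * (b ^ 2 + a ^ 2)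
      + Real.exp (-((s - y) ^ 2) / 4)) / 2 := by
  have h1 : Real.exp (y ^ 2 / 8) ≤ Real.exp (s ^ 2 / 8) * Real.exp (-((s - y) ^ 2) / 8) := by
    rw [← Real.exp_add]; apply Real.exp_le_exp.2; linarith
  have h2 : Real.exp (s ^ 2 / 4) = Real.exp (s ^ 2 / 8) ^ 2 := by
    rw [← Real.exp_nat_mul]; congr 1; push_cast; ring
  have h3 : Real.exp (-((s - y) ^ 2) / 4) = Real.exp (-((s - y) ^ 2) / 8) ^ 2 := by
    rw [← Real.exp_nat_mul]; congr 1; push_cast; ring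
  rw [h2, h3]
  have h4 := mul_le_mul_of_nonneg_right h1 (abs_nonneg a)
  rw [← sq_abs a]
  nlinarith [sq_nonneg (Real.exp (s ^ 2 / 8) * |a| - Real.exp (-((s - y) ^ 2) / 8)),
    sq_nonneg (Real.exp (s ^ 2 / 8) * b)]

lemma aux_core (v g : ℝ → ℝ) (hv : LocallyIntegrable v volume)
    (hg : LocallyIntegrable g volume)
    (hweak : ∀ φ : ℝ → ℝ, ContDiff ℝ (⊤ : ℕ∞) φ → HasCompactSupport φ →
      ∫ y : ℝ, v y * deriv φ y = -∫ y : ℝ, g y * φ y)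
    (hint : Integrable (fun y : ℝ => Real.exp (y ^ 2 / 4) * ((v y) ^ 2 + (g y) ^ 2))) :
    ∃ M > (0 : ℝ), ∀ᵐ y : ℝ, |Real.exp (y ^ 2 / 8) * v y| ≤ M := by
  have hgi : Integrable g := by
    refine ((hint.add aux_gauss).div_const 2).mono' hg.aestronglyMeasurable
      (ae_of_all _ fun s => ?_)
    have := aux_pt 0 s (g s) (v s) (by simp)
    simpa using this
  have hvi : Integrable (fun y => v y ^ 2) := by
    refine hint.mono' (hv.aestronglyMeasurable.pow 2) (ae_of_all _ fun s => ?_)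
    rw [Real.norm_eq_abs, abs_of_nonneg (sq_nonneg _)]
    have : 1 ≤ Real.exp (s ^ 2 / 4) := Real.one_le_exp (by positivity)
    nlinarith [sq_nonneg (v s), sq_nonneg (g s)]
  set F : ℝ → ℝ := fun x => ∫ t in (0:ℝ)..x, g t with hF
  have hFc : Continuous F := intervalIntegral.continuous_primitive
    (fun a b => hgi.intervalIntegrable) 0
  obtain ⟨c, hc⟩ := aux_dbr (u := fun y => v y - F y) (hv.sub hFc.locallyIntegrable) (by
    intro φ hφ hφc
    have hd : Continuous (deriv φ) := hφ.continuous_deriv (by exact_mod_cast le_top)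
    simp only [sub_mul]
    rw [integral_sub (aux_int hv hd hφc.deriv) (aux_int hFc.locallyIntegrable hd hφc.deriv),
      hweak φ hφ hφc, aux_ibp hgi hφ hφc, sub_self])
  have hw : Integrable (fun y => (c + F y) ^ 2) := by
    refine hvi.congr ?_
    filter_upwards [hc] with y hy
    rw [← hy]; ring
  have htop : Tendsto F atTop (𝓝 (∫ x in Ioi 0, g x)) :=
    intervalIntegral_tendsto_integral_Ioi 0 hgi.integrableOn tendsto_id
  have hbot : Tendsto F atBot (𝓝 (-∫ x in Iic 0, g x)) := by
    have := (intervalIntegral_tendsto_integral_Iic 0 hgi.integrableOn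
      (tendsto_id (α := ℝ) (x := atBot))).neg
    refine this.congr fun x => ?_
    rw [hF]; simp only [id]; rw [intervalIntegral.integral_symm, neg_neg]
  have ztop : c + ∫ x in Ioi 0, g x = 0 := by
    have h := IntegrableAtFilter.eq_zero_of_tendsto (l := atTop)
      (hw.integrableAtFilter _) (fun s hs => by
        obtain ⟨a, ha⟩ := mem_atTop_sets.1 hs
        exact top_unique (by rw [← Real.volume_Ici (a := a)]; exact measure_mono ha))
      ((htop.const_add c).pow 2)
    exact pow_eq_zero_iff (two_ne_zero) |>.1 h
  have zbot : c + -∫ x in Iic 0, g x = 0 := by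
    have h := IntegrableAtFilter.eq_zero_of_tendsto (l := atBot)
      (hw.integrableAtFilter _) (fun s hs => by
        obtain ⟨a, ha⟩ := mem_atBot_sets.1 hs
        exact top_unique (by rw [← Real.volume_Iic (a := a)]; exact measure_mono ha))
      ((hbot.const_add c).pow 2)
    exact pow_eq_zero_iff (two_ne_zero) |>.1 h
  set M := ((∫ s, Real.exp (s ^ 2 / 4) * ((v s) ^ 2 + (g s) ^ 2))
    + ∫ s, Real.exp (-(s ^ 2) / 4)) / 2 with hM
  have bound : ∀ (y : ℝ) (S : Set ℝ), MeasurableSet S →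
      (∀ s ∈ S, y ^ 2 + (s - y) ^ 2 ≤ s ^ 2) →
      Real.exp (y ^ 2 / 8) * |∫ s in S, g s| ≤ M := by
    intro y S hS hs
    have hG : Integrable (fun s : ℝ => Real.exp (-((s - y) ^ 2) / 4)) :=
      aux_gauss.comp_sub_right y
    calc Real.exp (y ^ 2 / 8) * |∫ s in S, g s|
        ≤ Real.exp (y ^ 2 / 8) * ∫ s in S, |g s| := by
          gcongr; exact abs_integral_le_integral_abs
      _ = ∫ s in S, Real.exp (y ^ 2 / 8) * |g s| := by rw [integral_const_mul]
      _ ≤ ∫ s in S, (Real.exp (s ^ 2 / 4) * ((v s) ^ 2 + (g s) ^ 2)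
            + Real.exp (-((s - y) ^ 2) / 4)) / 2 := by
          apply setIntegral_mono_on (hgi.abs.const_mul _).integrableOn
            ((hint.add hG).div_const 2).integrableOn hS
          intro s hs'
          exact aux_pt y s (g s) (v s) (hs s hs')
      _ ≤ ∫ s, (Real.exp (s ^ 2 / 4) * ((v s) ^ 2 + (g s) ^ 2)
            + Real.exp (-((s - y) ^ 2) / 4)) / 2 := by
          apply setIntegral_le_integral ((hint.add hG).div_const 2)
          exact ae_of_all _ fun s => by
            simp only [Pi.zero_apply, Pi.add_apply]; positivity
      _ = M := by
          rw [integral_div, integral_add hint hG,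
            integral_sub_right_eq_self (fun s : ℝ => Real.exp (-(s ^ 2) / 4)) y]
  refine ⟨max M 1, by positivity, ?_⟩
  filter_upwards [hc] with y hy
  have hvy : v y = c + F y := by linarith
  rw [abs_mul, abs_of_pos (Real.exp_pos _)]
  refine le_trans ?_ (le_max_left M 1)
  rcases le_total 0 y with h | h
  · have e : v y = -∫ s in Ioi y, g s := by
      have := intervalIntegral.integral_interval_add_Ioi (a := 0) (b := y) (f := g) (μ := volume)
        hgi.integrableOn hgi.integrableOn
      rw [hvy, hF]; simp only; linarith
    rw [e, abs_neg]
    refine bound y _ measurableSet_Ioi fun s hs => ?_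
    have : y < s := hs
    nlinarith
  · have e : v y = ∫ s in Iic y, g s := by
      have := intervalIntegral.integral_Iic_sub_Iic (a := 0) (b := y) (f := g) (μ := volume)
        hgi.integrableOn hgi.integrableOn
      rw [hvy, hF]; simp only; linarith
    rw [e]
    refine bound y _ measurableSet_Iic fun s hs => ?_
    have : s ≤ y := hs
    nlinarith

/-- One-dimensional weighted Sobolev embedding into `L^∞`. -/
theorem stmt_11 (v g : ℝ → ℝ)
    (hv : MeasureTheory.LocallyIntegrable v volume)
    (hweak : ∀ φ : ℝ → ℝ, ContDiff ℝ (⊤ : ℕ∞) φ → HasCompactSupport φ →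
      ∫ y : ℝ, v y * deriv φ y = -∫ y : ℝ, g y * φ y)
    (hint : Integrable (fun y : ℝ => Real.exp (y ^ 2 / 4) * ((v y) ^ 2 + (g y) ^ 2))) :
    ∃ M > (0 : ℝ), ∀ᵐ y : ℝ, |Real.exp (y ^ 2 / 8) * v y| ≤ M := by
  by_cases hall : ∀ φ : ℝ → ℝ, ContDiff ℝ (⊤ : ℕ∞) φ → HasCompactSupport φ →
      Integrable (fun y => g y * φ y)
  · refine aux_core v g hv ?_ hweak hint
    intro x
    let b : ContDiffBump x := ⟨1, 2, by norm_num, by norm_num⟩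
    refine ⟨Metric.closedBall x 1, Metric.closedBall_mem_nhds x one_pos, ?_⟩
    refine ((hall b b.contDiff b.hasCompactSupport).integrableOn).congr_fun ?_
      Metric.isClosed_closedBall.measurableSet
    intro y hy
    have : b y = 1 := b.one_of_mem_closedBall hy
    simp [this]
  · -- some `g φ₀` is not integrable: then `v` has zero weak derivative
    push Not at hall
    obtain ⟨φ₀, h₀, h₀c, hn⟩ := hall
    have key : ∀ φ : ℝ → ℝ, ContDiff ℝ (⊤ : ℕ∞) φ → HasCompactSupport φ →
        ∫ y : ℝ, v y * deriv φ y = 0 := by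
      intro φ hφ hφc
      have hz : ∫ y : ℝ, v y * deriv φ₀ y = 0 := by
        rw [hweak φ₀ h₀ h₀c, integral_undef hn, neg_zero]
      by_cases hi : Integrable (fun y => g y * φ y)
      · have hn' : ¬ Integrable (fun y => g y * (φ₀ y + φ y)) := by
          intro h
          apply hn
          refine (h.sub hi).congr (ae_of_all _ fun y => ?_)
          simp only [Pi.sub_apply]; ring
        have h1 := hweak (fun y => φ₀ y + φ y) (h₀.add hφ) (h₀c.add hφc)
        rw [integral_undef hn', neg_zero] at h1
        have hd : ∀ y, deriv (fun y => φ₀ y + φ y) y = deriv φ₀ y + deriv φ y := fun y =>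
          deriv_fun_add (h₀.differentiable (by simp) y) (hφ.differentiable (by simp) y)
        simp only [hd, mul_add] at h1
        rw [integral_add
          (aux_int hv (h₀.continuous_deriv (by exact_mod_cast le_top)) h₀c.deriv)
          (aux_int hv (hφ.continuous_deriv (by exact_mod_cast le_top)) hφc.deriv), hz] at h1
        simpa using h1
      · rw [hweak φ hφ hφc, integral_undef hi, neg_zero]
    refine aux_core v (fun _ => 0) hv (locallyIntegrable_const 0) ?_ ?_
    · intro φ hφ hφc
      rw [key φ hφ hφc]; simp
    · refine hint.mono' ?_ (ae_of_all _ fun y => ?_)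
      · exact (Continuous.aestronglyMeasurable (by fun_prop)).mul
          ((hv.aestronglyMeasurable.pow 2).add aestronglyMeasurable_const)
      · rw [Real.norm_eq_abs, abs_of_nonneg (by positivity)]
        have := Real.exp_pos (y ^ 2 / 4)
        apply mul_le_mul_of_nonneg_left _ this.le
        nlinarith [sq_nonneg (g y)]
end
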